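/- arXiv:2412.14891 — 5 statements merged into one kernel-verified Lean document; each statement's English description precedes it below -/
import Mathlib

section
/- For all integers 1 ≤ d < k and every ε > 0 there exists n0 such that the following holds for every n ≥ n0 and every real δ with 2^{−1/(k−d)} ≤ δ ≤ 1. Every k-graph G on n vertices with δ_d(G) ≥ (δ + ε)·binom(n−d, k−d) contains a tight-connected set of edges C ⊆ E(G) such that every d-element vertex set is contained in at least δ^{k−d}·binom(n−d, k−d) edges belonging to C. -/
/-- A set `C` of edges of a `k`-graph is tight-connected: between any two edges of `C` there is
a finite sequence of edges from `C` in which consecutive edges intersect in `k−1` vertices. -/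
def TightConn {V : Type*} [DecidableEq V] (k : ℕ) (C : Finset (Finset V)) : Prop :=
  ∀ e ∈ C, ∀ f ∈ C, ∃ (m : ℕ) (w : ℕ → Finset V), w 0 = e ∧ w m = f ∧
    (∀ i ≤ m, w i ∈ C) ∧ (∀ i < m, ((w i) ∩ (w (i+1))).card = k - 1)

open Finset in
theorem kk_fin (n r : ℕ) (A : Finset (Finset (Fin n))) (hr : 1 ≤ r)
    (hA : ∀ a ∈ A, a.card = r) (hne : A.Nonempty) :
    ∃ x : ℕ, x.choose r ≤ A.card ∧ r * A.card ≤ (x + 1) * (Finset.shadow A).card := by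
  obtain ⟨a, ha⟩ := hne
  have hrn : r ≤ n := by
    have := Finset.card_le_univ a
    rw [hA a ha] at this
    simpa using this
  have hsz : (A : Set (Finset (Fin n))).Sized r := fun b hb => hA b hb
  have hle : A.card ≤ n.choose r := by simpa using hsz.card_le
  set x := Nat.findGreatest (fun x => x.choose r ≤ A.card) n with hx
  have hr1 : r.choose r ≤ A.card := by
    rw [Nat.choose_self]; exact Finset.card_pos.2 ⟨a, ha⟩
  have hrx : r ≤ x := Nat.le_findGreatest hrn hr1
  have hxn : x ≤ n := Nat.findGreatest_le n
  have hxA : x.choose r ≤ A.card := Nat.findGreatest_spec (P := fun x => x.choose r ≤ A.card) hrn hr1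
  have hub : A.card ≤ (x + 1).choose r := by
    rcases Nat.lt_or_ge x n with h | h
    · have := Nat.findGreatest_is_greatest (P := fun x => x.choose r ≤ A.card)
        (n := n) (k := x + 1) (by omega) (by omega)
      simp only [not_le] at this
      exact this.le
    · have : x = n := le_antisymm hxn h
      rw [this]
      exact hle.trans (Nat.choose_le_choose r (Nat.le_succ n))
  refine ⟨x, hxA, ?_⟩
  have hkk := kruskal_katona_lovasz_form (i := 1) hr hrx hxn hsz hxA
  simp only [Function.iterate_one] at hkk
  obtain ⟨s, rfl⟩ : ∃ s, r = s + 1 := ⟨r - 1, by omega⟩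
  simp only [Nat.add_sub_cancel] at hkk
  have h1 := Nat.add_one_mul_choose_eq x s
  calc (s + 1) * A.card ≤ (s + 1) * (x + 1).choose (s + 1) := Nat.mul_le_mul_left _ hub
    _ = (x + 1) * x.choose s := by rw [h1]; ring
    _ ≤ _ := Nat.mul_le_mul_left _ hkk

theorem kk_gen {V : Type*} [Fintype V] [DecidableEq V] (r : ℕ) (A : Finset (Finset V)) (hr : 1 ≤ r)
    (hA : ∀ a ∈ A, a.card = r) (hne : A.Nonempty) :
    ∃ x : ℕ, x.choose r ≤ A.card ∧ r * A.card ≤ (x + 1) * (Finset.shadow A).card := by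
  let f := Fintype.equivFin V
  let g : Finset V → Finset (Fin (Fintype.card V)) := fun s => s.map f.toEmbedding
  have hg : Function.Injective g := Finset.map_injective _
  obtain ⟨x, h1, h2⟩ := kk_fin (Fintype.card V) r (A.image g) hr
    (by
      intro a ha
      obtain ⟨b, hb, rfl⟩ := Finset.mem_image.1 ha
      simp [g, hA b hb])
    (hne.image g)
  rw [Finset.card_image_of_injective _ hg] at h1 h2
  refine ⟨x, h1, h2.trans (Nat.mul_le_mul_left _ ?_)⟩
  rw [← Finset.card_image_of_injective A.shadow hg]
  apply Finset.card_le_card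
  intro t ht
  obtain ⟨s, hs, a, ha, rfl⟩ := Finset.mem_shadow_iff.1 ht
  obtain ⟨b, hb, rfl⟩ := Finset.mem_image.1 hs
  obtain ⟨c, hc, rfl⟩ := Finset.mem_map.1 ha
  refine Finset.mem_image.2 ⟨b.erase c, Finset.erase_mem_shadow hb hc, ?_⟩
  simp only [g]
  exact Finset.map_erase _ _ _

theorem big_colour {V ι : Type*} [Fintype V] [DecidableEq V] [DecidableEq ι] (r : ℕ) (hr : 1 ≤ r)
    (A : Finset (Finset V)) (hA : ∀ a ∈ A, a.card = r) (hne : A.Nonempty)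
    (W : Finset V) (hW : ∀ a ∈ A, a ⊆ W) (c : Finset V → ι)
    (hc : ∀ a ∈ A, ∀ b ∈ A, ∀ x ∈ a, ∀ y ∈ b, a.erase x = b.erase y → c a = c b) :
    ∃ a ∈ A, ∃ X : ℕ, X.choose r ≤ (A.filter (fun b => c b = c a)).card ∧
      r * A.card ≤ (X + 1) * W.card.choose (r - 1) := by
  have key : ∀ a : Finset V, ∃ x : ℕ, a ∈ A → x.choose r ≤ (A.filter (fun b => c b = c a)).card ∧
      r * (A.filter (fun b => c b = c a)).card ≤
        (x + 1) * (Finset.shadow (A.filter (fun b => c b = c a))).card := by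
    intro a
    by_cases ha : a ∈ A
    · obtain ⟨x, h⟩ := kk_gen r (A.filter (fun b => c b = c a)) hr
        (fun b hb => hA b (Finset.mem_filter.1 hb).1) ⟨a, by simp [ha]⟩
      exact ⟨x, fun _ => h⟩
    · exact ⟨0, fun h => absurd h ha⟩
  choose x hx using key
  obtain ⟨a, ha, hmax⟩ := Finset.exists_max_image A x hne
  refine ⟨a, ha, x a, (hx a ha).1, ?_⟩
  have hsum : A.card = ∑ i ∈ A.image c, (A.filter (fun b => c b = i)).card :=
    Finset.card_eq_sum_card_image c A
  have hb : ∀ i ∈ A.image c, r * (A.filter (fun b => c b = i)).card ≤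
      (x a + 1) * (Finset.shadow (A.filter (fun b => c b = i))).card := by
    intro i hi
    obtain ⟨b, hb, rfl⟩ := Finset.mem_image.1 hi
    exact (hx b hb).2.trans (Nat.mul_le_mul_right _ (Nat.succ_le_succ (hmax b hb)))
  have hdisj : ∑ i ∈ A.image c, (Finset.shadow (A.filter (fun b => c b = i))).card ≤
      W.card.choose (r - 1) := by
    rw [← Finset.card_biUnion, ← Finset.card_powersetCard]
    · apply Finset.card_le_card
      intro t ht
      obtain ⟨i, hi, ht⟩ := Finset.mem_biUnion.1 ht
      obtain ⟨s, hs, y, hy, rfl⟩ := Finset.mem_shadow_iff.1 ht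
      have hsA := (Finset.mem_filter.1 hs).1
      rw [Finset.mem_powersetCard]
      refine ⟨(Finset.erase_subset _ _).trans (hW s hsA), ?_⟩
      rw [Finset.card_erase_of_mem hy, hA s hsA]
    · intro i hi j hj hij
      change Disjoint _ _
      rw [Finset.disjoint_left]
      intro t hti htj
      obtain ⟨s, hs, y, hy, rfl⟩ := Finset.mem_shadow_iff.1 hti
      obtain ⟨s', hs', y', hy', he⟩ := Finset.mem_shadow_iff.1 htj
      rw [Finset.mem_filter] at hs hs'
      exact hij (by rw [← hs.2, ← hs'.2]; exact hc s hs.1 s' hs'.1 y hy y' hy' he.symm)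
  calc r * A.card = ∑ i ∈ A.image c, r * (A.filter (fun b => c b = i)).card := by
        rw [← Finset.mul_sum, ← hsum]
    _ ≤ ∑ i ∈ A.image c, (x a + 1) * (Finset.shadow (A.filter (fun b => c b = i))).card :=
        Finset.sum_le_sum hb
    _ = (x a + 1) * ∑ i ∈ A.image c, (Finset.shadow (A.filter (fun b => c b = i))).card := by
        rw [Finset.mul_sum]
    _ ≤ _ := Nat.mul_le_mul_left _ hdisj

/-- adjacency of edges -/
def AdjE {V : Type*} [DecidableEq V] (k : ℕ) (E : Finset (Finset V)) (e f : Finset V) : Prop :=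
  e ∈ E ∧ f ∈ E ∧ (e ∩ f).card = k - 1

theorem AdjE.symm' {V : Type*} [DecidableEq V] {k : ℕ} {E : Finset (Finset V)} {e f : Finset V}
    (h : AdjE k E e f) : AdjE k E f e := ⟨h.2.1, h.1, by rw [Finset.inter_comm]; exact h.2.2⟩

open Classical in
/-- tight component of `e` -/
noncomputable def compE {V : Type*} [DecidableEq V] (k : ℕ) (E : Finset (Finset V))
    (e : Finset V) : Finset (Finset V) :=
  E.filter (fun f => Relation.ReflTransGen (AdjE k E) e f)

theorem rtg_symm {V : Type*} [DecidableEq V] {k : ℕ} {E : Finset (Finset V)} {e f : Finset V}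
    (h : Relation.ReflTransGen (AdjE k E) e f) : Relation.ReflTransGen (AdjE k E) f e := by
  induction h with
  | refl => exact .refl
  | tail _ h ih => exact .head h.symm' ih

theorem compE_eq {V : Type*} [DecidableEq V] {k : ℕ} {E : Finset (Finset V)} {e f : Finset V}
    (h : Relation.ReflTransGen (AdjE k E) e f) : compE k E e = compE k E f := by
  ext g
  simp only [compE, Finset.mem_filter]
  exact and_congr_right fun _ => ⟨fun h' => (rtg_symm h).trans h', fun h' => h.trans h'⟩

theorem compE_tight {V : Type*} [DecidableEq V] (k : ℕ) (E : Finset (Finset V)) (e : Finset V) :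
    TightConn k (compE k E e) := by
  intro a ha b hb
  simp only [compE, Finset.mem_filter] at ha hb
  have hab := (rtg_symm ha.2).trans hb.2
  have haE := ha.1
  have hea := ha.2
  clear ha hb
  induction hab with
  | refl =>
    refine ⟨0, fun _ => a, rfl, rfl, fun i _ => ?_, fun i hi => absurd hi (Nat.not_lt_zero _)⟩
    simp [compE, haE, hea]
  | @tail p q hp hpq ih =>
    obtain ⟨m, w, h0, hm, hw, hadj⟩ := ih
    refine ⟨m + 1, fun i => if i ≤ m then w i else q, by simp [h0], by simp, ?_, ?_⟩
    · intro i hi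
      by_cases him : i ≤ m
      · simp [him, hw i him]
      · simp only [him, if_false, compE, Finset.mem_filter]
        exact ⟨hpq.2.1, (hea.trans hp).tail hpq⟩
    · intro i hi
      by_cases him : i < m
      · have h1 : i ≤ m := him.le
        have h2 : i + 1 ≤ m := him
        simp [h1, h2, hadj i him]
      · have : i = m := by omega
        subst this
        simp [hm, hpq.2.2]

theorem big_comp {V : Type*} [Fintype V] [DecidableEq V] (d r : ℕ) (hr : 1 ≤ r)
    (E : Finset (Finset V)) (hE : ∀ e ∈ E, e.card = d + r) (D : Finset V) (hD : D.card = d)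
    (hne : (E.filter (fun e => D ⊆ e)).Nonempty) :
    ∃ e0 ∈ E, ∃ X : ℕ, X.choose r ≤ ((compE (d + r) E e0).filter (fun e => D ⊆ e)).card ∧
      r * (E.filter (fun e => D ⊆ e)).card ≤
        (X + 1) * (Fintype.card V - d).choose (r - 1) := by
  classical
  set ED := E.filter (fun e => D ⊆ e) with hED
  have hinj : ∀ F ⊆ ED, (F.image (fun e => e \ D)).card = F.card := by
    intro F hF
    apply Finset.card_image_of_injOn
    intro e he f hf hef
    have h1 := (Finset.mem_filter.1 (hF he)).2
    have h2 := (Finset.mem_filter.1 (hF hf)).2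
    simp only at hef
    rw [← Finset.sdiff_union_of_subset h1, ← Finset.sdiff_union_of_subset h2, hef]
  obtain ⟨a, ha, X, h1, h2⟩ := big_colour r hr (ED.image (fun e => e \ D))
    (by
      intro a ha
      obtain ⟨e, he, rfl⟩ := Finset.mem_image.1 ha
      rw [hED, Finset.mem_filter] at he
      rw [Finset.card_sdiff_of_subset he.2, hE e he.1, hD]; omega)
    (hne.image _) (Finset.univ \ D)
    (by
      intro a ha
      obtain ⟨e, he, rfl⟩ := Finset.mem_image.1 ha
      exact Finset.sdiff_subset_sdiff (Finset.subset_univ _) le_rfl)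
    (fun a => compE (d + r) E (a ∪ D))
    (by
      intro a ha b hb x hx y hy hxy
      obtain ⟨e, he, rfl⟩ := Finset.mem_image.1 ha
      obtain ⟨f, hf, rfl⟩ := Finset.mem_image.1 hb
      rw [hED, Finset.mem_filter] at he hf
      simp only [Finset.sdiff_union_of_subset he.2, Finset.sdiff_union_of_subset hf.2]
      rw [Finset.mem_sdiff] at hx hy
      by_cases hef : e = f
      · rw [hef]
      · apply compE_eq
        apply Relation.ReflTransGen.single
        refine ⟨he.1, hf.1, ?_⟩
        have hsub : e.erase x ⊆ f := by
          intro z hz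
          rw [Finset.mem_erase] at hz
          by_cases hzD : z ∈ D
          · exact hf.2 hzD
          · have : z ∈ (e \ D).erase x := by simp [hz, hzD]
            rw [hxy] at this
            simp only [Finset.mem_erase, Finset.mem_sdiff] at this
            exact this.2.1
        have hle : (e.erase x).card ≤ (e ∩ f).card := Finset.card_le_card
          (Finset.subset_inter (Finset.erase_subset _ _) hsub)
        rw [Finset.card_erase_of_mem hx.1, hE e he.1] at hle
        have hlt : (e ∩ f).card < d + r := by
          rw [← hE e he.1]
          apply Finset.card_lt_card
          refine Finset.ssubset_iff_subset_ne.2 ⟨Finset.inter_subset_left, fun h => hef ?_⟩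
          exact Finset.eq_of_subset_of_card_le (Finset.inter_eq_left.1 h)
            (by rw [hE e he.1, hE f hf.1])
        omega)
  obtain ⟨e0, he0, rfl⟩ := Finset.mem_image.1 ha
  have he0' := Finset.mem_filter.1 (hED ▸ he0)
  refine ⟨e0, he0'.1, X, h1.trans ?_, ?_⟩
  · rw [← hinj ((compE (d + r) E e0).filter (fun e => D ⊆ e))
      (Finset.filter_subset_filter _ (Finset.filter_subset _ _))]
    apply Finset.card_le_card
    intro b hb
    rw [Finset.mem_filter] at hb
    obtain ⟨hb, hbc⟩ := hb
    obtain ⟨f, hf, rfl⟩ := Finset.mem_image.1 hb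
    rw [hED, Finset.mem_filter] at hf
    rw [Finset.sdiff_union_of_subset he0'.2, Finset.sdiff_union_of_subset hf.2] at hbc
    refine Finset.mem_image_of_mem _ (Finset.mem_filter.2 ⟨?_, hf.2⟩)
    rw [← hbc]
    simp only [compE, Finset.mem_filter]
    exact ⟨hf.1, .refl⟩
  · rw [hinj ED le_rfl] at h2
    rwa [Finset.card_sdiff_of_subset (Finset.subset_univ _), hD, Finset.card_univ] at h2

theorem comp_step {V : Type*} [Fintype V] [DecidableEq V] (d r : ℕ) (hr : 1 ≤ r)
    (E : Finset (Finset V)) (hE : ∀ e ∈ E, e.card = d + r) (D D' : Finset V) (hD : D.card = d)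
    (hD' : D'.card = d) (hDD : (D ∩ D').card + 1 = d) (e0 e1 : Finset V)
    (hbig : (Fintype.card V - d + 1).choose r <
      ((compE (d + r) E e0).filter (fun e => D ⊆ e)).card +
      ((compE (d + r) E e1).filter (fun e => D' ⊆ e)).card) :
    compE (d + r) E e0 = compE (d + r) E e1 := by
  classical
  have hinj : ∀ (e0 D : Finset V),
      (((compE (d + r) E e0).filter (fun e => D ⊆ e)).image (fun e => e \ D)).card =
      ((compE (d + r) E e0).filter (fun e => D ⊆ e)).card := by
    intro e0 D
    apply Finset.card_image_of_injOn
    intro e he f hf hef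
    have h1 := (Finset.mem_filter.1 he).2
    have h2 := (Finset.mem_filter.1 hf).2
    simp only at hef
    rw [← Finset.sdiff_union_of_subset h1, ← Finset.sdiff_union_of_subset h2, hef]
  have hsub : ∀ (e0 D : Finset V), D.card = d → (D ∩ D') ⊆ D  → ∀ T ⊆ D,
      ((compE (d + r) E e0).filter (fun e => D ⊆ e)).image (fun e => e \ D) ⊆
        Finset.powersetCard r (Finset.univ \ T) := by
    intro e0 D hD _ T hT a ha
    obtain ⟨e, he, rfl⟩ := Finset.mem_image.1 ha
    rw [Finset.mem_filter, compE, Finset.mem_filter] at he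
    rw [Finset.mem_powersetCard]
    refine ⟨Finset.sdiff_subset_sdiff (Finset.subset_univ _) hT, ?_⟩
    rw [Finset.card_sdiff_of_subset he.2, hE e he.1.1, hD]; omega
  have hnd : ¬ Disjoint (((compE (d + r) E e0).filter (fun e => D ⊆ e)).image (fun e => e \ D))
      (((compE (d + r) E e1).filter (fun e => D' ⊆ e)).image (fun e => e \ D')) := by
    intro hdis
    have h := Finset.card_le_card (Finset.union_subset
      (hsub e0 D hD Finset.inter_subset_left (D ∩ D') Finset.inter_subset_left)
      (hsub e1 D' hD' Finset.inter_subset_left (D ∩ D') Finset.inter_subset_right))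
    rw [Finset.card_union_of_disjoint hdis, hinj, hinj, Finset.card_powersetCard,
      Finset.card_sdiff_of_subset (Finset.subset_univ _), Finset.card_univ] at h
    have hV : d ≤ Fintype.card V := hD ▸ Finset.card_le_univ D
    have : Fintype.card V - (D ∩ D').card = Fintype.card V - d + 1 := by omega
    rw [this] at h
    omega
  rw [Finset.not_disjoint_iff] at hnd
  obtain ⟨a, ha, hb⟩ := hnd
  obtain ⟨e, he, rfl⟩ := Finset.mem_image.1 ha
  obtain ⟨f, hf, hfe⟩ := Finset.mem_image.1 hb
  rw [Finset.mem_filter, compE, Finset.mem_filter] at he hf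
  rw [compE_eq he.1.2, compE_eq hf.1.2]
  apply compE_eq
  apply Relation.ReflTransGen.single
  refine ⟨he.1.1, hf.1.1, ?_⟩
  have heq : e ∩ f = (e \ D) ∪ (D ∩ D') := by
    ext z
    have h1 := @he.2 z
    have h2 := @hf.2 z
    have h3 : z ∈ f \ D' ↔ z ∈ e \ D := by rw [hfe]
    simp only [Finset.mem_sdiff, Finset.mem_union, Finset.mem_inter] at h3 ⊢
    tauto
  rw [heq, Finset.card_union_of_disjoint, Finset.card_sdiff_of_subset he.2, hE e he.1.1, hD]
  · omega
  · exact Finset.disjoint_of_subset_right Finset.inter_subset_left Finset.sdiff_disjoint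

theorem swap_connect {V β : Type*} [DecidableEq V] (d : ℕ) (g : Finset V → β)
    (h : ∀ D D' : Finset V, D.card = d → D'.card = d → (D ∩ D').card + 1 = d → g D = g D') :
    ∀ (m : ℕ) (D D' : Finset V), D.card = d → D'.card = d → (D \ D').card = m → g D = g D' := by
  intro m
  induction m with
  | zero =>
    intro D D' hD hD' h0
    rw [Finset.card_eq_zero, Finset.sdiff_eq_empty_iff_subset] at h0
    rw [Finset.eq_of_subset_of_card_le h0 (by omega)]
  | succ m ih =>
    intro D D' hD hD' hm
    obtain ⟨a, ha⟩ : (D \ D').Nonempty := Finset.card_pos.1 (by omega)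
    have hc : (D' \ D).card = m + 1 := by
      rw [← hm]; exact Finset.card_sdiff_comm (by omega)
    obtain ⟨b, hb⟩ : (D' \ D).Nonempty := Finset.card_pos.1 (by omega)
    have ha' := Finset.mem_sdiff.1 ha
    have hb' := Finset.mem_sdiff.1 hb
    have hpos : 1 ≤ D.card := Finset.card_pos.2 ⟨a, ha'.1⟩
    have hc2 : (insert b (D.erase a)).card = d := by
      rw [Finset.card_insert_of_notMem (by simp [hb'.2]), Finset.card_erase_of_mem ha'.1]; omega
    have e1 : D ∩ insert b (D.erase a) = D.erase a := by
      ext z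
      simp only [Finset.mem_inter, Finset.mem_insert, Finset.mem_erase]
      constructor
      · rintro ⟨h1, rfl | h2⟩
        · exact absurd h1 hb'.2
        · exact h2
      · intro h; exact ⟨h.2, Or.inr h⟩
    rw [h D (insert b (D.erase a)) hD hc2 (by
      rw [e1, Finset.card_erase_of_mem ha'.1]; omega)]
    apply ih _ _ hc2 hD'
    have e2 : insert b (D.erase a) \ D' = (D \ D').erase a := by
      ext z
      simp only [Finset.mem_sdiff, Finset.mem_insert, Finset.mem_erase]
      constructor
      · rintro ⟨rfl | h2, h3⟩
        · exact absurd hb'.1 h3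
        · exact ⟨h2.1, h2.2, h3⟩
      · rintro ⟨h1, h2, h3⟩; exact ⟨Or.inr ⟨h1, h2⟩, h3⟩
    rw [e2, Finset.card_erase_of_mem ha]; omega

/-- numeric step -/
theorem num_one (r m X N : ℕ) (hr : 1 ≤ r) (δ ε : ℝ) (hδ : 0 < δ) (hδ1 : δ ≤ 1) (hε : 0 < ε)
    (hrm : r ≤ m) (hm : ((1 + ε) * r + r) ≤ ε / 2 * m)
    (hN : (δ + ε) * (m.choose r : ℝ) ≤ N) (hX : r * N ≤ (X + 1) * m.choose (r - 1)) :
    (1 + ε / 2) * δ ^ r * (m.choose r : ℝ) ≤ (X.choose r : ℝ) := by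
  obtain ⟨s, rfl⟩ : ∃ s, r = s + 1 := ⟨r - 1, by omega⟩
  simp only [Nat.add_sub_cancel] at hX
  have hXR : ((s + 1 : ℕ) : ℝ) * N ≤ (X + 1) * m.choose s := by exact_mod_cast hX
  have hid : (m.choose (s + 1) : ℝ) * ((s + 1 : ℕ) : ℝ) = m.choose s * ((m : ℝ) - s) := by
    have := Nat.choose_succ_right_eq m s
    have h2 : ((m - s : ℕ) : ℝ) = (m : ℝ) - s := by push_cast [show s ≤ m by omega]; ring
    rw [← h2]; exact_mod_cast this
  have hcpos : (0 : ℝ) < m.choose s := by exact_mod_cast Nat.choose_pos (by omega)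
  have h1 : (δ + ε) * ((m : ℝ) - s) ≤ X + 1 := by
    have hs : (0 : ℝ) ≤ ((s + 1 : ℕ) : ℝ) := by positivity
    have := mul_le_mul_of_nonneg_left hN hs
    have h3 : (m.choose s : ℝ) * ((δ + ε) * ((m : ℝ) - s)) ≤ m.choose s * (X + 1) := by
      calc (m.choose s : ℝ) * ((δ + ε) * ((m : ℝ) - s))
          = (δ + ε) * (m.choose s * ((m : ℝ) - s)) := by ring
        _ = ((s + 1 : ℕ) : ℝ) * ((δ + ε) * m.choose (s + 1)) := by rw [← hid]; ring
        _ ≤ ((s + 1 : ℕ) : ℝ) * N := this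
        _ ≤ (X + 1) * m.choose s := hXR
        _ = _ := by ring
    exact le_of_mul_le_mul_left h3 hcpos
  push_cast at hm
  have h2 : (δ + ε / 2) * m ≤ (X : ℝ) - s := by
    have hs0 : (0 : ℝ) ≤ s := by positivity
    nlinarith [mul_nonneg hs0 (sub_nonneg.2 hδ1)]
  have hm0 : (0 : ℝ) ≤ m := by positivity
  have hXs : s ≤ X := by
    have : (s : ℝ) ≤ X := by
      have : 0 ≤ (δ + ε / 2) * m := by positivity
      linarith
    exact_mod_cast this
  have hA := Nat.pow_le_choose (α := ℝ) (s + 1) X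
  have hB := Nat.choose_le_pow_div (α := ℝ) (s + 1) m
  have hcast : ((X + 1 - (s + 1) : ℕ) : ℝ) = (X : ℝ) - s := by
    rw [Nat.add_sub_add_right]; push_cast [hXs]; ring
  rw [hcast] at hA
  refine le_trans ?_ hA
  have hfac : (0 : ℝ) < ((s + 1).factorial : ℝ) := by exact_mod_cast Nat.factorial_pos _
  have hpow : (1 + ε / 2) * δ ^ (s + 1) ≤ (δ + ε / 2) ^ (s + 1) := by
    calc (1 + ε / 2) * δ ^ (s + 1) ≤ (1 + ε / 2) ^ (s + 1) * δ ^ (s + 1) := by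
          gcongr
          exact le_self_pow₀ (by linarith) (by omega)
      _ = ((1 + ε / 2) * δ) ^ (s + 1) := by rw [mul_pow]
      _ ≤ _ := by
          gcongr
          nlinarith
  calc (1 + ε / 2) * δ ^ (s + 1) * (m.choose (s + 1) : ℝ)
      ≤ (δ + ε / 2) ^ (s + 1) * ((m : ℝ) ^ (s + 1) / (s + 1).factorial) := by gcongr
    _ = ((δ + ε / 2) * m) ^ (s + 1) / (s + 1).factorial := by rw [mul_pow]; ring
    _ ≤ _ := by gcongr

theorem num_two (r m a b : ℕ) (hr : 1 ≤ r) (p ε : ℝ) (hp : 1 / 2 ≤ p) (hε : 0 < ε)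
    (hrm : r ≤ m) (hm : ((1 + ε) * r + r) ≤ ε / 2 * m)
    (ha : (1 + ε / 2) * p * (m.choose r : ℝ) ≤ a) (hb : (1 + ε / 2) * p * (m.choose r : ℝ) ≤ b) :
    (m + 1).choose r < a + b := by
  obtain ⟨s, rfl⟩ : ∃ s, r = s + 1 := ⟨r - 1, by omega⟩
  have hid : (m.choose (s + 1) : ℝ) * ((s + 1 : ℕ) : ℝ) = m.choose s * ((m : ℝ) - s) := by
    have := Nat.choose_succ_right_eq m s
    have h2 : ((m - s : ℕ) : ℝ) = (m : ℝ) - s := by push_cast [show s ≤ m by omega]; ring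
    rw [← h2]; exact_mod_cast this
  have hcpos : (0 : ℝ) < m.choose s := by exact_mod_cast Nat.choose_pos (by omega)
  have hcpos' : (0 : ℝ) < m.choose (s + 1) := by exact_mod_cast Nat.choose_pos hrm
  push_cast at hm hid
  have hs0 : (0 : ℝ) ≤ s := by positivity
  have h1 : (s : ℝ) + 1 < ε / 2 * ((m : ℝ) - s) := by nlinarith [mul_nonneg hε.le hs0]
  have h2 : (m.choose s : ℝ) < ε / 2 * m.choose (s + 1) := by
    have hs1 : (0 : ℝ) < s + 1 := by positivity
    have : (s + 1 : ℝ) * m.choose s < (s + 1) * (ε / 2 * m.choose (s + 1)) := by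
      calc (s + 1 : ℝ) * m.choose s < ε / 2 * ((m : ℝ) - s) * m.choose s := by gcongr
        _ = ε / 2 * (m.choose s * ((m : ℝ) - s)) := by ring
        _ = _ := by rw [← hid]; ring
    exact lt_of_mul_lt_mul_left this hs1.le
  have h3 : (1 + ε / 2) * (1 / 2) * (m.choose (s + 1) : ℝ) ≤ (1 + ε / 2) * p * m.choose (s + 1) := by
    gcongr
  have : ((m + 1).choose (s + 1) : ℝ) < a + b := by
    rw [Nat.choose_succ_succ]; push_cast
    nlinarith
  exact_mod_cast this

/-- For all `1 ≤ d < k` and `ε > 0` there exists `n0` such that for every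
`n ≥ n0` and every `δ ∈ [2^{−1/(k−d)}, 1]`, every `k`-graph on `n` vertices with
`δ_d(G) ≥ (δ+ε)·C(n−d,k−d)` contains a tight-connected set of edges `C ⊆ E(G)` such that every
`d`-element vertex set is contained in at least `δ^{k−d}·C(n−d,k−d)` edges of `C`. -/
theorem stmt_13 (k d : ℕ) (hd : 1 ≤ d) (hdk : d < k) (ε : ℝ) (hε : 0 < ε) :
    ∃ n0 : ℕ, ∀ n : ℕ, n0 ≤ n →
    ∀ (V : Type) [Fintype V] [DecidableEq V], Fintype.card V = n →
    ∀ E : Finset (Finset V), (∀ e ∈ E, e.card = k) →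
    ∀ δ : ℝ, (2 : ℝ) ^ (-(1 : ℝ) / ((k : ℝ) - (d : ℝ))) ≤ δ → δ ≤ 1 →
    (∀ D : Finset V, D.card = d →
      (δ + ε) * ((n - d).choose (k - d) : ℝ) ≤ ((E.filter (fun e => D ⊆ e)).card : ℝ)) →
    ∃ C : Finset (Finset V), C ⊆ E ∧ TightConn k C ∧
      ∀ D : Finset V, D.card = d →
        δ ^ (k - d) * ((n - d).choose (k - d) : ℝ) ≤
          ((C.filter (fun e => D ⊆ e)).card : ℝ) := by
  obtain ⟨r, rfl⟩ : ∃ r, k = d + r := ⟨k - d, by omega⟩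
  have hr : 1 ≤ r := by omega
  obtain ⟨M, hM⟩ := exists_nat_ge (((1 + ε) * r + r) / (ε / 2))
  refine ⟨d + r + M, ?_⟩
  intro n hn V _ _ hV E hE δ hδ2 hδ1 hdeg
  rw [Nat.add_sub_cancel_left] at hdeg ⊢
  set m := n - d with hmdef
  have hrm : r ≤ m := by omega
  have hm : ((1 + ε) * r + r) ≤ ε / 2 * m := by
    have h1 : (M : ℝ) ≤ m := by exact_mod_cast (by omega : M ≤ m)
    have h2 := hM.trans h1
    rw [div_le_iff₀ (by positivity)] at h2
    linarith
  have h2pos : (0 : ℝ) < (2 : ℝ) ^ (-(1 : ℝ) / (((d + r : ℕ) : ℝ) - (d : ℝ))) := by positivity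
  have hδ : 0 < δ := lt_of_lt_of_le h2pos hδ2
  have hhalf : 1 / 2 ≤ δ ^ r := by
    have h := pow_le_pow_left₀ h2pos.le hδ2 r
    rw [← Real.rpow_natCast, ← Real.rpow_mul (by norm_num)] at h
    have hr0 : (r : ℝ) ≠ 0 := by positivity
    have he : -(1 : ℝ) / (((d + r : ℕ) : ℝ) - (d : ℝ)) * (r : ℝ) = -1 := by
      push_cast; rw [add_sub_cancel_left, div_mul_cancel₀ _ hr0]
    rw [he, Real.rpow_neg_one] at h
    linarith
  have hcpos : (0 : ℝ) < m.choose r := by exact_mod_cast Nat.choose_pos hrm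
  have key : ∀ D : Finset V, ∃ e0 : Finset V, D.card = d →
      (1 + ε / 2) * δ ^ r * (m.choose r : ℝ) ≤
        (((compE (d + r) E e0).filter (fun e => D ⊆ e)).card : ℝ) := by
    intro D
    by_cases hD : D.card = d
    · have hdD := hdeg D hD
      have hne : (E.filter (fun e => D ⊆ e)).Nonempty := by
        rw [← Finset.card_pos]
        have : (0 : ℝ) < (δ + ε) * (m.choose r : ℝ) := by positivity
        exact_mod_cast this.trans_le hdD
      obtain ⟨e0, _, X, h1, h2⟩ := big_comp d r hr E hE D hD hne
      rw [hV] at h2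
      refine ⟨e0, fun _ => ?_⟩
      refine (num_one r m X _ hr δ ε hδ hδ1 hε hrm hm hdD h2).trans ?_
      exact_mod_cast h1
    · exact ⟨∅, fun h => absurd h hD⟩
  choose g hg using key
  obtain ⟨D0, hD0⟩ : ∃ D0 : Finset V, D0.card = d := by
    obtain ⟨t, _, ht⟩ := Finset.exists_subset_card_eq
      (s := (Finset.univ : Finset V)) (n := d) (by rw [Finset.card_univ]; omega)
    exact ⟨t, ht⟩
  refine ⟨compE (d + r) E (g D0), fun x hx => by
    simp only [compE, Finset.mem_filter] at hx
    exact hx.1, compE_tight _ _ _, ?_⟩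
  intro D hD
  have hsame := swap_connect d (fun D => compE (d + r) E (g D)) (by
    intro D D' hD hD' hDD
    refine comp_step d r hr E hE D D' hD hD' hDD _ _ ?_
    rw [hV]
    exact num_two r m _ _ hr (δ ^ r) ε hhalf hε hrm hm (hg D hD) (hg D' hD')) _ D0 D hD0 hD rfl
  rw [hsame]
  refine le_trans ?_ (hg D hD)
  have : 0 ≤ δ ^ r * (m.choose r : ℝ) := by positivity
  nlinarith
end

section
/- For all integers k ≥ 2, 1 ≤ d < k, r ≥ 1 and every ε > 0, there exists s0 ≥ k + r such that for every integer s ≥ s0 there exists n0 such that the following holds for every n ≥ n0 and every real δ ≥ 0. Let G be a k-graph on an n-element vertex set with δ_d(G) ≥ (δ + ε)·binom(n−d, k−d). Then for every r-element vertex set R, the number of s-element vertex sets S with R ⊆ S and δ_d(G[S]) ≥ (δ + ε/2)·binom(s−d, k−d) is at least (1 − e^{−√s})·binom(n−r, s−r). -/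
open Finset in
/-- number of functions with prescribed image of full size -/
lemma aux_card_image {ι V : Type} [Fintype ι] [DecidableEq ι] [Fintype V] [DecidableEq V] (T : Finset V)
    (h : T.card = Fintype.card ι) :
    ((univ : Finset (ι → V)).filter (fun g => univ.image g = T)).card = (Fintype.card ι).factorial := by
  have e0 : ι ≃ T := Fintype.equivOfCardEq (by simp [h])
  rw [← Fintype.card_equiv e0, ← Finset.card_univ (α := ι ≃ T)]
  symm
  refine Finset.card_bij (fun e _ i => (e i : V)) ?_ ?_ ?_
  · intro e _
    simp only [mem_filter, mem_univ, true_and]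
    ext x
    simp only [mem_image, mem_univ, true_and]
    constructor
    · rintro ⟨i, rfl⟩; exact (e i).2
    · intro hx; exact ⟨e.symm ⟨x, hx⟩, by simp⟩
  · intro e _ e' _ hh
    ext i
    exact congrFun hh i
  · intro g hg
    simp only [mem_filter, mem_univ, true_and] at hg
    have hm : ∀ i, g i ∈ T := fun i => hg ▸ mem_image_of_mem g (mem_univ i)
    have hs : Function.Surjective (fun i => (⟨g i, hm i⟩ : T)) := by
      rintro ⟨x, hx⟩
      rw [← hg] at hx
      obtain ⟨i, -, hi⟩ := mem_image.1 hx
      exact ⟨i, Subtype.ext hi⟩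
    have hb := (Fintype.bijective_iff_surjective_and_card (fun i => (⟨g i, hm i⟩ : T))).2
      ⟨hs, by simp [h]⟩
    exact ⟨Equiv.ofBijective _ hb, mem_univ _, rfl⟩

open Finset in
lemma aux_split {ι V : Type} [Fintype ι] [DecidableEq ι] [Fintype V] [DecidableEq V]
    (T f : Finset V) (B : Finset ι) (hT : T.card = Fintype.card ι) (hf : f.card = B.card)
    (hfT : f ⊆ T) :
    ((univ : Finset (ι → V)).filter (fun g => univ.image g = T ∧ B.image g = f)).card
      ≤ B.card.factorial * (Fintype.card ι - B.card).factorial := by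
  have h1 := aux_card_image (ι := B) f (by simp [hf])
  have h2 := aux_card_image (ι := (Bᶜ : Finset ι)) (T \ f) (by
    rw [card_sdiff_of_subset hfT, Fintype.card_coe, card_compl, hT, hf])
  rw [Fintype.card_coe] at h1 h2
  rw [card_compl] at h2
  rw [← h1, ← h2, ← card_product]
  refine card_le_card_of_injOn (fun g => (fun i => g i, fun i => g i)) ?_ ?_
  · intro g hg
    simp only [coe_filter, mem_univ, true_and, Set.mem_ofPred_eq] at hg
    obtain ⟨hg, hB⟩ := hg
    have hinj : Function.Injective g := by
      have hc : (univ.image g).card = (univ : Finset ι).card := by rw [hg, hT, card_univ]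
      have := card_image_iff.1 hc
      rwa [coe_univ, Set.injOn_univ] at this
    simp only [coe_product, Set.mem_prod, coe_filter, mem_univ, true_and, Set.mem_ofPred_eq]
    constructor
    · rw [← hB]; ext x; simp
    · rw [← hB, ← hg]; ext x; simp only [mem_image, mem_univ, true_and, mem_sdiff, Subtype.exists, mem_compl]
      constructor
      · rintro ⟨i, hi, rfl⟩
        exact ⟨⟨i, rfl⟩, fun ⟨j, hj, hji⟩ => hi (hinj hji ▸ hj)⟩
      · rintro ⟨⟨i, rfl⟩, h⟩
        exact ⟨i, fun hi => h ⟨i, hi, rfl⟩, rfl⟩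
  · intro g _ g' _ hh
    simp only [Prod.mk.injEq] at hh
    ext i
    by_cases hi : i ∈ B
    · exact congrFun hh.1 ⟨i, hi⟩
    · exact congrFun hh.2 ⟨i, by simpa using hi⟩

lemma aux_exp (l : ℝ) (hl : 0 ≤ l) : Real.exp (-l) ≤ 1 - l + l^2/2 := by
  have h := Real.quadratic_le_exp_of_nonneg hl
  rw [Real.exp_neg, inv_le_iff_one_le_mul₀ (Real.exp_pos _)]
  have : 0 ≤ 1 - l + l^2/2 := by nlinarith [sq_nonneg (l-1)]
  nlinarith [mul_le_mul_of_nonneg_left h this, sq_nonneg (l^2)]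

open Finset in
lemma aux_factor {V : Type} [Fintype V] [DecidableEq V] (q t ρ : ℕ) (φ : (Fin t → V) → ℝ) :
    ∑ g : (Fin q × Fin t) ⊕ Fin ρ → V, ∏ j, φ (fun i => g (Sum.inl (j, i)))
      = (Fintype.card V : ℝ)^ρ * (∑ h, φ h)^q := by
  rw [← (Equiv.sumArrowEquivProdArrow _ _ V).symm.sum_comp, Fintype.sum_prod_type]
  simp only [Equiv.sumArrowEquivProdArrow_symm_apply_inl, sum_const, card_univ, Fintype.card_fun,
    Fintype.card_fin, nsmul_eq_mul]
  rw [← mul_sum, ← (Equiv.curry _ _ V).symm.sum_comp, Fintype.sum_pow]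
  simp

open Finset in
lemma aux_core {V : Type} [Fintype V] [DecidableEq V] (q t ρ : ℕ) (F : Finset (Finset V))
    (hF : ∀ f ∈ F, f.card = t) (a η : ℝ) (ha : 0 ≤ a) (ha1 : a ≤ 1) (hη : 0 ≤ η)
    (hFa : a * (Fintype.card V : ℝ)^t ≤ t.factorial * F.card) :
    (((univ : Finset (Finset V)).filter (fun T => T.card = q*t+ρ ∧
      ((F.filter (fun f => f ⊆ T)).card : ℝ) < (a - η) * ((q*t+ρ).choose t))).card : ℝ)
       * (q*t+ρ).factorial ≤ (Fintype.card V : ℝ)^(q*t+ρ) * Real.exp (- (q * η^2/2)) := by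
  set n := Fintype.card V with hn
  set m := q*t+ρ with hm
  let ι := (Fin q × Fin t) ⊕ Fin ρ
  have hι : Fintype.card ι = m := by simp [ι, hm]
  set bad := (univ : Finset (Finset V)).filter (fun T => T.card = m ∧
      ((F.filter (fun f => f ⊆ T)).card : ℝ) < (a - η) * (m.choose t)) with hbad
  let B : Fin q → Finset ι := fun j => univ.image (fun i => Sum.inl (j, i))
  have hB : ∀ j, (B j).card = t := by
    intro j
    rw [card_image_of_injective _ (fun x y h => (Prod.mk.inj (Sum.inl.inj h)).2)]; simp
  let ind : Finset V → ℝ := fun f => if f ∈ F then 1 else 0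
  let Y : (ι → V) → ℝ := fun g => ∑ j, ind ((B j).image g)
  let φ : (Fin t → V) → ℝ := fun h => Real.exp (-η * ind (univ.image h))
  -- step 1
  have s1 : ∑ g : ι → V, Real.exp (-η * Y g) = (n : ℝ)^ρ * (∑ h, φ h)^q := by
    rw [← aux_factor]
    refine sum_congr rfl fun g _ => ?_
    simp only [Y, φ, mul_sum, Real.exp_sum, B, image_image]
    rfl
  -- step 2
  have s2 : ∑ h, φ h ≤ (n:ℝ)^t * Real.exp (-(a * (η - η^2/2))) := by
    have hφ : ∀ h, φ h = 1 - (1 - Real.exp (-η)) * ind (univ.image h) := by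
      intro h
      simp only [φ, ind]
      split_ifs <;> simp
    have hsum : (t.factorial : ℝ) * F.card = ∑ h : Fin t → V, ind (univ.image h) := by
      simp only [ind]
      rw [sum_boole]
      norm_cast
      rw [card_eq_sum_card_fiberwise (f := fun h : Fin t → V => univ.image h) (t := F)
        (by intro h hh; simpa using hh)]
      rw [mul_comm, ← smul_eq_mul, ← sum_const]
      refine sum_congr rfl fun f hf => ?_
      have := aux_card_image (ι := Fin t) f (by simp [hF f hf])
      rw [Fintype.card_fin] at this
      rw [← this, filter_filter]
      congr 1
      ext h
      simp only [mem_filter, mem_univ, true_and]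
      constructor
      · intro hh; exact ⟨hh ▸ hf, hh⟩
      · exact fun hh => hh.2
    have h0 := aux_exp η hη
    have h1 : Real.exp (-η) ≤ 1 := by simpa using hη
    calc ∑ h, φ h = (n:ℝ)^t - (1 - Real.exp (-η)) * (t.factorial * F.card) := by
          simp only [hφ]
          rw [sum_sub_distrib, ← mul_sum, hsum]
          simp [hn]
      _ ≤ (n:ℝ)^t - (1 - Real.exp (-η)) * (a * (n:ℝ)^t) := by
          gcongr
      _ = (n:ℝ)^t * (1 - a * (1 - Real.exp (-η))) := by ring
      _ ≤ (n:ℝ)^t * (-(a * (η - η^2/2)) + 1) := by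
          gcongr
          nlinarith
      _ ≤ _ := by
          gcongr
          exact Real.add_one_le_exp _
  -- step 3
  have s3 : ∀ T ∈ bad, (m.factorial : ℝ) * Real.exp (-η * (q * (a - η)))
      ≤ ∑ g ∈ (univ : Finset (ι → V)).filter (fun g => univ.image g = T), Real.exp (-η * Y g) := by
    intro T hT
    simp only [hbad, mem_filter, mem_univ, true_and] at hT
    obtain ⟨hTc, hTF⟩ := hT
    set A := (univ : Finset (ι → V)).filter (fun g => univ.image g = T) with hA
    have hAc : A.card = m.factorial := by
      rw [hA, aux_card_image T (by rw [hTc, hι]), hι]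
    have hY : ∑ g ∈ A, Y g ≤ q * (a - η) * m.factorial := by
      simp only [Y]
      rw [sum_comm]
      have : ∀ j ∈ (univ : Finset (Fin q)), ∑ g ∈ A, ind ((B j).image g) ≤ (a - η) * m.factorial := by
        intro j _
        simp only [ind]
        rw [sum_boole]
        have htm : t ≤ m := by
          have := card_le_univ (B j)
          rwa [hB, hι] at this
        have hc : (A.filter (fun g => (B j).image g ∈ F)).card
            ≤ (F.filter (fun f => f ⊆ T)).card * (t.factorial * (m - t).factorial) := by
          rw [card_eq_sum_card_fiberwise (f := fun g : ι → V => (B j).image g)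
            (t := F.filter (fun f => f ⊆ T)) (by
              intro g hg
              simp only [hA, coe_filter, mem_filter, mem_univ, true_and, Set.mem_ofPred_eq] at hg ⊢
              exact ⟨hg.2, hg.1 ▸ image_subset_image (subset_univ _)⟩)]
          rw [← smul_eq_mul]
          refine sum_le_card_nsmul _ _ _ fun f hf => ?_
          rw [mem_filter] at hf
          have := aux_split T f (B j) (by rw [hTc, hι]) (by rw [hF f hf.1, hB]) hf.2
          rw [hB, hι] at this
          refine le_trans (card_le_card ?_) this
          intro g hg
          simp only [hA, mem_filter, mem_univ, true_and] at hg ⊢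
          exact ⟨hg.1.1, hg.2⟩
        have hc' : ((A.filter (fun g => (B j).image g ∈ F)).card : ℝ)
            ≤ (F.filter (fun f => f ⊆ T)).card * (t.factorial * (m - t).factorial) := by
          exact_mod_cast hc
        refine hc'.trans ?_
        have hch : ((m.choose t : ℝ) * t.factorial * (m-t).factorial) = m.factorial := by
          exact_mod_cast Nat.choose_mul_factorial_mul_factorial htm
        rw [← hch]
        have hp : (0:ℝ) ≤ t.factorial * (m - t).factorial := by positivity
        calc _ ≤ ((a - η) * (m.choose t)) * ((t.factorial : ℝ) * (m - t).factorial) := by gcongr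
          _ = _ := by ring
      refine (sum_le_card_nsmul _ _ _ this).trans (le_of_eq ?_)
      simp
      ring
    have hpt : ∀ g ∈ A, Real.exp (-η * (q * (a - η))) * (1 - η * (Y g - q * (a - η))) ≤ Real.exp (-η * Y g) := by
      intro g _
      have := Real.add_one_le_exp (- η * (Y g - q * (a - η)))
      calc _ ≤ Real.exp (-η * (q * (a - η))) * Real.exp (- η * (Y g - q * (a - η))) := by
            gcongr; linarith
        _ = _ := by rw [← Real.exp_add]; congr 1; ring
    refine le_trans ?_ (sum_le_sum hpt)
    rw [← mul_sum, sum_sub_distrib, ← mul_sum, sum_sub_distrib, sum_const, sum_const, hAc, mul_comm]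
    gcongr
    simp only [nsmul_eq_mul]
    nlinarith
  -- step 4
  have s4 : (bad.card : ℝ) * ((m.factorial : ℝ) * Real.exp (-η * (q * (a - η))))
      ≤ ∑ g : ι → V, Real.exp (-η * Y g) := by
    rw [← nsmul_eq_mul]
    refine (card_nsmul_le_sum _ _ _ s3).trans ?_
    rw [← sum_fiberwise (s := (univ : Finset (ι → V))) (g := fun g => univ.image g)]
    exact sum_le_sum_of_subset_of_nonneg (subset_univ _) fun T _ _ =>
      sum_nonneg fun g _ => (Real.exp_pos _).le
  have hφ0 : 0 ≤ ∑ h, φ h := sum_nonneg fun h _ => (Real.exp_pos _).le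
  have s5 := s4.trans (s1.le.trans (mul_le_mul_of_nonneg_left (pow_le_pow_left₀ hφ0 s2 q)
    (by positivity)))
  rw [mul_pow, ← Real.exp_nat_mul, ← mul_assoc, ← mul_assoc ((n:ℝ)^ρ), ← pow_mul, ← pow_add] at s5
  have hmm : ρ + t * q = m := by rw [hm]; ring
  rw [hmm] at s5
  rw [← mul_le_mul_iff_left₀ (Real.exp_pos (-η * (q * (a - η)))), mul_assoc ((n:ℝ)^m), ← Real.exp_add]
  refine s5.trans ?_
  gcongr
  have : 0 ≤ (q:ℝ) * η^2 * (1 - a) := mul_nonneg (by positivity) (by linarith)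
  nlinarith

lemma aux_bern (x C t : ℕ) (θ : ℝ) (hx : 0 < x) (hC : C ≤ x) (h : (t:ℝ) * C ≤ θ * x) :
    (1 - θ) * (x:ℝ)^t ≤ ((x - C : ℕ) : ℝ)^t := by
  have hx' : (0:ℝ) < x := by exact_mod_cast hx
  have hCx : (C:ℝ) ≤ x := by exact_mod_cast hC
  have e : ((x - C : ℕ) : ℝ) = (1 + (-(C/x))) * x := by
    rw [Nat.cast_sub hC]; field_simp; ring
  have hd : (C:ℝ)/x ≤ 1 := by rw [div_le_one hx']; exact hCx
  have hb := one_add_mul_le_pow (a := -((C:ℝ)/x)) (by linarith) t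
  rw [e, mul_pow]
  refine mul_le_mul_of_nonneg_right (le_trans ?_ hb) (by positivity)
  have : (t:ℝ) * (C/x) ≤ θ := by
    rw [← mul_div_assoc, div_le_iff₀ hx']; exact h
  linarith

lemma aux_choose_lower (x w t : ℕ) (θ : ℝ) (hx : 0 < x) (hC : w + t ≤ x)
    (h : (t:ℝ) * (w + t : ℕ) ≤ θ * x) :
    (1 - θ) * (x:ℝ)^t ≤ t.factorial * ((x - w).choose t : ℝ) := by
  refine (aux_bern x (w+t) t θ hx hC h).trans ?_
  have h1 := Nat.pow_sub_le_descFactorial (x - w) t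
  rw [Nat.descFactorial_eq_factorial_mul_choose] at h1
  have h2 : (x - (w+t))^t ≤ (x - w + 1 - t)^t := Nat.pow_le_pow_left (by omega) t
  exact_mod_cast h2.trans h1

open Finset in
lemma aux_count {V : Type} [Fintype V] [DecidableEq V] (W : Finset V) (s : ℕ) (hs : W.card ≤ s) :
    ((univ : Finset (Finset V)).filter (fun S => S.card = s ∧ W ⊆ S)).card
      = (Fintype.card V - W.card).choose (s - W.card) := by
  rw [← card_compl, ← card_powersetCard]
  refine card_bij' (fun S _ => S \ W) (fun T _ => T ∪ W) ?_ ?_ ?_ ?_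
  · intro S hS
    simp only [mem_filter, mem_univ, true_and] at hS
    rw [mem_powersetCard, card_sdiff_of_subset hS.2, hS.1]
    refine ⟨fun x hx => ?_, rfl⟩
    simp only [mem_sdiff] at hx
    simpa using hx.2
  · intro T hT
    rw [mem_powersetCard] at hT
    have hd : Disjoint T W := by
      rw [disjoint_left]; intro x hx; simpa using hT.1 hx
    simp only [mem_filter, mem_univ, true_and]
    refine ⟨?_, subset_union_right⟩
    rw [card_union_of_disjoint hd, hT.2]; omega
  · intro S hS
    simp only [mem_filter, mem_univ, true_and] at hS
    exact sdiff_union_of_subset hS.2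
  · intro T hT
    rw [mem_powersetCard] at hT
    have hd : Disjoint T W := by
      rw [disjoint_left]; intro x hx; simpa using hT.1 hx
    exact union_sdiff_cancel_right hd

open Finset in
lemma aux_badD {V : Type} [Fintype V] [DecidableEq V] (n s d t : ℕ) (ht : 1 ≤ t) (hd : 1 ≤ d)
    (δ ε : ℝ) (hδ : 0 ≤ δ) (hε : 0 < ε)
    (hn : Fintype.card V = n) (E : Finset (Finset V)) (hE : ∀ e ∈ E, e.card = d + t)
    (D W : Finset V) (hD : D.card = d) (hDW : D ⊆ W)
    (hdeg : (δ + ε) * ((n - d).choose t : ℝ) ≤ ((E.filter (fun e => D ⊆ e)).card : ℝ))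
    (hs1 : W.card + t ≤ s) (hs2 : (t:ℝ) * (W.card + t : ℕ) ≤ (ε/8) * s)
    (hn1 : s ≤ n) (hn2 : (s:ℝ) * s ≤ (1/2) * n)
    (hn3 : (t:ℝ) * (d + t : ℕ) ≤ (ε/8) * n) :
    (((univ : Finset (Finset V)).filter (fun S => (S.card = s ∧ W ⊆ S) ∧
        ((E.filter (fun e => D ⊆ e ∧ e ⊆ S)).card : ℝ) < (δ + ε/2) * ((s - d).choose t : ℝ))).card : ℝ)
      ≤ (2 * Real.exp (-(((s - W.card)/t : ℕ) * (ε/8)^2/2))) *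
        ((univ : Finset (Finset V)).filter (fun S => S.card = s ∧ W ⊆ S)).card := by
  have hdw : d ≤ W.card := hD ▸ card_le_card hDW
  set w := W.card with hw
  set F := (E.filter (fun e => D ⊆ e)).image (fun e => e \ D) with hFdef
  have hFc : F.card = (E.filter (fun e => D ⊆ e)).card := by
    refine card_image_of_injOn ?_
    intro e he e' he' h
    simp only [coe_filter, Set.mem_ofPred_eq] at he he'
    simp only at h
    rw [← sdiff_union_of_subset he.2, h, sdiff_union_of_subset he'.2]
  have hF : ∀ f ∈ F, f.card = t := by
    intro f hf
    simp only [hFdef, mem_image, mem_filter] at hf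
    obtain ⟨e, ⟨he, hDe⟩, rfl⟩ := hf
    rw [card_sdiff_of_subset hDe, hE e he, hD]; omega
  have hFle : F.card ≤ (n - d).choose t := by
    have : F ⊆ powersetCard t Dᶜ := by
      intro f hf
      rw [mem_powersetCard]
      refine ⟨?_, hF f hf⟩
      simp only [hFdef, mem_image, mem_filter] at hf
      obtain ⟨e, ⟨he, hDe⟩, rfl⟩ := hf
      intro x hx
      simp only [mem_sdiff] at hx
      simpa using hx.2
    have := card_le_card this
    rwa [card_powersetCard, card_compl, hn, hD] at this
  rw [← hFc] at hdeg
  have hpos : (0:ℝ) < (n-d).choose t := by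
    exact_mod_cast Nat.choose_pos (by omega)
  have hle1 : δ + ε ≤ 1 := by
    have : (F.card : ℝ) ≤ (n-d).choose t := by exact_mod_cast hFle
    by_contra hcon
    push Not at hcon
    nlinarith
  have hn0 : 0 < n := by omega
  have hs0 : 0 < s := by omega
  have hlow := aux_choose_lower n d t (ε/8) hn0 (by omega) hn3
  have hnt : (0:ℝ) ≤ (n:ℝ)^t := by positivity
  have hFa : (δ + 3*ε/4) * (Fintype.card V : ℝ)^t ≤ t.factorial * F.card := by
    rw [hn]
    calc (δ + 3*ε/4) * (n:ℝ)^t ≤ ((δ+ε) * (1 - ε/8)) * (n:ℝ)^t := by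
          refine mul_le_mul_of_nonneg_right ?_ hnt
          nlinarith
      _ = (δ+ε) * ((1 - ε/8) * (n:ℝ)^t) := by ring
      _ ≤ (δ+ε) * (t.factorial * ((n - d).choose t : ℝ)) := by gcongr
      _ = t.factorial * ((δ+ε) * ((n - d).choose t : ℝ)) := by ring
      _ ≤ _ := by gcongr
  set m := s - w with hm
  have hmq : (m/t)*t + m % t = m := Nat.div_add_mod' m t
  have core := aux_core (m/t) t (m % t) F hF (δ + 3*ε/4) (ε/8) (by positivity) (by linarith)
    (by positivity) hFa
  rw [hmq, hn] at core
  -- compare s and m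
  have hcs : (δ + ε/2) * ((s - d).choose t : ℝ) ≤ (δ + 3*ε/4 - ε/8) * (m.choose t) := by
    have h1 := aux_choose_lower s w t (ε/8) hs0 hs1 hs2
    have h2 : (t.factorial : ℝ) * ((s-d).choose t) ≤ (s:ℝ)^t := by
      have := Nat.descFactorial_le_pow (s-d) t
      rw [Nat.descFactorial_eq_factorial_mul_choose] at this
      have h3 : (s-d)^t ≤ s^t := Nat.pow_le_pow_left (by omega) t
      exact_mod_cast this.trans h3
    have hf : (0:ℝ) < t.factorial := by exact_mod_cast Nat.factorial_pos t
    rw [← mul_le_mul_iff_right₀ hf]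
    calc _ = (δ + ε/2) * ((t.factorial : ℝ) * ((s-d).choose t)) := by ring
      _ ≤ (δ + ε/2) * (s:ℝ)^t := by gcongr
      _ ≤ ((δ + 3*ε/4 - ε/8) * (1 - ε/8)) * (s:ℝ)^t := by
          refine mul_le_mul_of_nonneg_right ?_ (by positivity)
          nlinarith
      _ = (δ + 3*ε/4 - ε/8) * ((1 - ε/8) * (s:ℝ)^t) := by ring
      _ ≤ (δ + 3*ε/4 - ε/8) * (t.factorial * (m.choose t : ℝ)) := by
          refine mul_le_mul_of_nonneg_left h1 ?_
          linarith
      _ = _ := by ring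
  have hcard : ((univ : Finset (Finset V)).filter (fun S => (S.card = s ∧ W ⊆ S) ∧
        ((E.filter (fun e => D ⊆ e ∧ e ⊆ S)).card : ℝ) < (δ + ε/2) * ((s - d).choose t : ℝ))).card
      ≤ ((univ : Finset (Finset V)).filter (fun T => T.card = m ∧
      ((F.filter (fun f => f ⊆ T)).card : ℝ) < (δ + 3*ε/4 - ε/8) * (m.choose t))).card := by
    refine card_le_card_of_injOn (fun S => S \ W) ?_ ?_
    · intro S hS
      simp only [coe_filter, mem_univ, true_and, Set.mem_ofPred_eq] at hS ⊢
      obtain ⟨⟨hSc, hWS⟩, hlt⟩ := hS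
      refine ⟨by rw [card_sdiff_of_subset hWS, hSc], ?_⟩
      refine lt_of_le_of_lt ?_ (hlt.trans_le hcs)
      norm_cast
      refine card_le_card_of_injOn (fun f => f ∪ D) ?_ ?_
      · intro f hf
        simp only [coe_filter, Set.mem_ofPred_eq] at hf ⊢
        obtain ⟨hfF, hfS⟩ := hf
        simp only [hFdef, mem_image, mem_filter] at hfF
        obtain ⟨e, ⟨he, hDe⟩, rfl⟩ := hfF
        rw [sdiff_union_of_subset hDe]
        refine ⟨he, hDe, ?_⟩
        rw [← sdiff_union_of_subset hDe]
        exact union_subset (hfS.trans sdiff_subset) (hDW.trans hWS)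
      · intro f hf f' hf' h
        simp only [coe_filter, Set.mem_ofPred_eq] at hf hf'
        have hdisj : ∀ f : Finset V, f ⊆ S \ W → Disjoint f D := by
          intro f hf
          rw [disjoint_left]
          intro x hx hxD
          exact (mem_sdiff.1 (hf hx)).2 (hDW hxD)
        simp only at h
        rw [← union_sdiff_cancel_right (hdisj f hf.2), h, union_sdiff_cancel_right (hdisj f' hf'.2)]
    · intro S hS S' hS' h
      simp only [coe_filter, mem_univ, true_and, Set.mem_ofPred_eq] at hS hS'
      simp only at h
      rw [← sdiff_union_of_subset hS.1.2, h, sdiff_union_of_subset hS'.1.2]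
  rw [aux_count W s (by omega), hn, ← hw, ← hm]
  have hcard' : (((univ : Finset (Finset V)).filter (fun S => (S.card = s ∧ W ⊆ S) ∧
        ((E.filter (fun e => D ⊆ e ∧ e ⊆ S)).card : ℝ) < (δ + ε/2) * ((s - d).choose t : ℝ))).card : ℝ)
      ≤ _ := Nat.cast_le.2 hcard
  refine hcard'.trans ?_
  have hf : (0:ℝ) < m.factorial := by exact_mod_cast Nat.factorial_pos m
  rw [← mul_le_mul_iff_left₀ hf]
  refine core.trans ?_
  have hlow2 := aux_choose_lower n w m (1/2) hn0 (by omega) (by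
    have e : w + m = s := by omega
    rw [e]
    refine le_trans ?_ hn2
    have : (m:ℝ) ≤ s := by exact_mod_cast (by omega : m ≤ s)
    gcongr)
  have : (n:ℝ)^m ≤ 2 * (m.factorial * ((n-w).choose m)) := by linarith
  calc _ ≤ (2 * (m.factorial * ((n-w).choose m : ℝ))) * Real.exp (-(((m/t : ℕ):ℝ) * (ε/8)^2/2)) := by
        gcongr
    _ = _ := by ring

open Filter in
lemma aux_asymp (c : ℝ) (hc : 0 < c) (d : ℕ) :
    ∀ᶠ s : ℕ in atTop, (s:ℝ)^d * (2 * Real.exp (-(c * s))) ≤ Real.exp (-Real.sqrt s) := by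
  have h1 : Tendsto (fun s : ℕ => (c/2) * (s:ℝ)) atTop atTop :=
    Tendsto.const_mul_atTop (by positivity) tendsto_natCast_atTop_atTop
  have h2 := (Real.tendsto_pow_mul_exp_neg_atTop_nhds_zero d).comp h1
  have h3 := h2.eventually_le_const (show (0:ℝ) < (c/2)^d/2 by positivity)
  have h4 : Tendsto (fun s : ℕ => (s:ℝ)) atTop atTop := tendsto_natCast_atTop_atTop
  filter_upwards [h3, h4.eventually_ge_atTop (4/c^2)] with s hs hs4
  simp only [Function.comp_apply, mul_pow] at hs
  have hcd : (0:ℝ) < (c/2)^d := by positivity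
  have h5 : (s:ℝ)^d * 2 * Real.exp (-(c/2*s)) ≤ 1 := by
    rw [← mul_le_mul_iff_right₀ hcd]
    linarith
  have h6 : Real.sqrt s ≤ c/2 * s := by
    rw [Real.sqrt_le_left (by positivity)]
    rw [div_le_iff₀ (by positivity)] at hs4
    nlinarith [Nat.cast_nonneg (α := ℝ) s]
  calc _ = ((s:ℝ)^d * 2 * Real.exp (-(c/2*s))) * Real.exp (-(c/2*s)) := by
        rw [mul_assoc _ (Real.exp _), ← Real.exp_add, mul_assoc]; congr 3; ring
    _ ≤ 1 * Real.exp (-(c/2*s)) := by gcongr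
    _ ≤ _ := by rw [one_mul]; gcongr



open Finset

/-- For all `2 ≤ k`, `1 ≤ d < k`, `r ≥ 1` and `ε > 0` there is `s0 ≥ k + r`
such that for every `s ≥ s0` there is `n0` such that for all `n ≥ n0` and all `δ ≥ 0`: if `G`
is a `k`-graph on an `n`-element vertex set with `δ_d(G) ≥ (δ+ε)·C(n−d,k−d)`, then for every
`r`-element vertex set `R`, the number of `s`-element vertex sets `S ⊇ R` with
`δ_d(G[S]) ≥ (δ+ε/2)·C(s−d,k−d)` is at least `(1 − e^{−√s})·C(n−r,s−r)`. -/
theorem stmt_15 (k d r : ℕ) (hk : 2 ≤ k) (hd : 1 ≤ d) (hdk : d < k) (hr : 1 ≤ r)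
    (ε : ℝ) (hε : 0 < ε) :
    ∃ s0 : ℕ, k + r ≤ s0 ∧ ∀ s : ℕ, s0 ≤ s → ∃ n0 : ℕ, ∀ n : ℕ, n0 ≤ n →
    ∀ δ : ℝ, 0 ≤ δ →
    ∀ (V : Type) [Fintype V] [DecidableEq V], Fintype.card V = n →
    ∀ E : Finset (Finset V), (∀ e ∈ E, e.card = k) →
    (∀ D : Finset V, D.card = d →
      (δ + ε) * ((n - d).choose (k - d) : ℝ) ≤ ((E.filter (fun e => D ⊆ e)).card : ℝ)) →
    ∀ R : Finset V, R.card = r →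
      (1 - Real.exp (-Real.sqrt s)) * ((n - r).choose (s - r) : ℝ) ≤
        (({S : Finset V | S.card = s ∧ R ⊆ S ∧
            ∀ D : Finset V, D ⊆ S → D.card = d →
              (δ + ε/2) * ((s - d).choose (k - d) : ℝ) ≤
                ((E.filter (fun e => D ⊆ e ∧ e ⊆ S)).card : ℝ)} :
          Set (Finset V)).ncard : ℝ) := by

  classical
  obtain ⟨t, rfl⟩ : ∃ t, k = d + t := ⟨k - d, by omega⟩
  have ht : 1 ≤ t := by omega
  have htR : (1:ℝ) ≤ t := by exact_mod_cast ht
  have hc : 0 < (ε/8)^2/2/(2*t) := by positivity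
  obtain ⟨s1, hs1⟩ := Filter.eventually_atTop.1 (aux_asymp _ hc d)
  obtain ⟨s2, hs2⟩ := exists_nat_ge ((t:ℝ) * ((r + d + t : ℕ):ℝ) / (ε/8))
  refine ⟨max (max s1 s2) (2*(d + t + r)), by omega, fun s hs => ?_⟩
  obtain ⟨n1, hn1⟩ := exists_nat_ge ((t:ℝ) * ((d + t : ℕ):ℝ) / (ε/8))
  refine ⟨max n1 (max s (2*s*s)), fun n hn δ hδ V _ _ hV E hE hdeg R hR => ?_⟩
  rw [Nat.add_sub_cancel_left] at *
  have hss1 : s1 ≤ s := by omega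
  have hss2 : s2 ≤ s := by omega
  have hss3 : 2*(d+t+r) ≤ s := by omega
  have hnn1 : n1 ≤ n := by omega
  have hnn2 : s ≤ n := by omega
  have hnn3 : 2*s*s ≤ n := by omega
  have hS2 : (t:ℝ) * ((r + d + t : ℕ):ℝ) ≤ (ε/8) * s := by
    rw [div_le_iff₀ (by positivity)] at hs2
    have : (s2:ℝ) ≤ s := by exact_mod_cast hss2
    nlinarith
  have hN1 : (t:ℝ) * ((d + t : ℕ):ℝ) ≤ (ε/8) * n := by
    rw [div_le_iff₀ (by positivity)] at hn1
    have : (n1:ℝ) ≤ n := by exact_mod_cast hnn1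
    nlinarith
  have hN2 : (s:ℝ) * s ≤ (1/2) * n := by
    have : 2*(s:ℝ)*s ≤ n := by exact_mod_cast hnn3
    linarith
  set P : ℝ := 2 * Real.exp (-((ε/8)^2/2/(2*t) * s)) with hP
  let Bad : Finset V → Finset (Finset V) := fun D =>
    (univ : Finset (Finset V)).filter (fun S => (S.card = s ∧ R ∪ D ⊆ S) ∧
        ((E.filter (fun e => D ⊆ e ∧ e ⊆ S)).card : ℝ) < (δ + ε/2) * ((s - d).choose t : ℝ))
  let All : Finset V → Finset (Finset V) := fun D =>
    (univ : Finset (Finset V)).filter (fun S => S.card = s ∧ R ∪ D ⊆ S)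
  have hbad : ∀ D ∈ powersetCard d (univ : Finset V), ((Bad D).card : ℝ) ≤ P * (All D).card := by
    intro D hD
    have hDc : D.card = d := (mem_powersetCard.1 hD).2
    have hw : (R ∪ D).card ≤ r + d := by
      have := card_union_le R D
      omega
    have := aux_badD n s d t ht hd δ ε hδ hε hV E hE D (R ∪ D) hDc subset_union_right (hdeg D hDc)
      (by omega) (by
        refine le_trans ?_ hS2
        have : (((R ∪ D).card + t : ℕ):ℝ) ≤ ((r + d + t : ℕ):ℝ) := by
          exact_mod_cast (by omega : (R ∪ D).card + t ≤ r + d + t)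
        gcongr) hnn2 hN2 hN1
    refine this.trans ?_
    have hq : (s:ℝ)/(2*t) ≤ ((s - (R ∪ D).card)/t : ℕ) := by
      have h1 := Nat.lt_mul_div_succ (s - (R ∪ D).card) (by omega : 0 < t)
      set q := (s - (R ∪ D).card)/t
      have h2 : s ≤ q * (2 * t) := by
        have : t * (q+1) = q * t + t := by ring
        have : q * (2 * t) = 2 * (q * t) := by ring
        omega
      rw [div_le_iff₀ (by positivity)]
      exact_mod_cast h2
    rw [hP]
    gcongr
    calc (ε/8)^2/2/(2*t) * s = (s/(2*t)) * (ε/8)^2/2 := by ring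
      _ ≤ _ := by gcongr
  set Tot := (univ : Finset (Finset V)).filter (fun S => S.card = s ∧ R ⊆ S) with hTot
  have hTotc : Tot.card = (n - r).choose (s - r) := by
    rw [hTot, aux_count R s (by omega), hV, hR]
  have hAll : ∑ D ∈ powersetCard d (univ : Finset V), (All D).card = Tot.card * s.choose d := by
    have : ∀ D, (All D).card = ∑ S ∈ Tot, if D ⊆ S then 1 else 0 := by
      intro D
      rw [← card_filter]
      simp only [All, hTot, filter_filter, union_subset_iff, and_assoc]
    simp only [this]
    rw [sum_comm, ← smul_eq_mul, ← sum_const]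
    refine sum_congr rfl fun S hS => ?_
    rw [← card_filter]
    simp only [hTot, mem_filter, mem_univ, true_and] at hS
    rw [← hS.1, ← card_powersetCard]
    congr 1
    ext D
    simp [mem_powersetCard, and_comm]
  set Good := Tot.filter (fun S => ∀ D : Finset V, D ⊆ S → D.card = d →
              (δ + ε/2) * ((s - d).choose t : ℝ) ≤
                ((E.filter (fun e => D ⊆ e ∧ e ⊆ S)).card : ℝ)) with hGood
  have hgoal : {S : Finset V | S.card = s ∧ R ⊆ S ∧
            ∀ D : Finset V, D ⊆ S → D.card = d →
              (δ + ε/2) * ((s - d).choose t : ℝ) ≤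
                ((E.filter (fun e => D ⊆ e ∧ e ⊆ S)).card : ℝ)} = (Good : Set (Finset V)) := by
    ext S
    simp [hGood, hTot, and_assoc]
  rw [hgoal, Set.ncard_coe_finset, ← hTotc]
  have hcov : Tot ⊆ Good ∪ (powersetCard d (univ : Finset V)).biUnion Bad := by
    intro S hS
    rw [mem_union]
    by_cases hg : S ∈ Good
    · exact Or.inl hg
    · right
      simp only [hGood, mem_filter, hS, true_and] at hg
      push Not at hg
      obtain ⟨D, hDS, hDc, hlt⟩ := hg
      simp only [hTot, mem_filter, mem_univ, true_and] at hS
      rw [mem_biUnion]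
      refine ⟨D, mem_powersetCard.2 ⟨subset_univ _, hDc⟩, ?_⟩
      simp only [Bad, mem_filter, mem_univ, true_and]
      exact ⟨⟨hS.1, union_subset hS.2 hDS⟩, hlt⟩
  have hc1 : (Tot.card : ℝ) ≤ Good.card + ∑ D ∈ powersetCard d (univ : Finset V), ((Bad D).card : ℝ) := by
    have := (card_le_card hcov).trans ((card_union_le _ _).trans
      (Nat.add_le_add_left card_biUnion_le _))
    exact_mod_cast this
  have hc2 : ∑ D ∈ powersetCard d (univ : Finset V), ((Bad D).card : ℝ) ≤ Real.exp (-Real.sqrt s) * Tot.card := by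
    calc _ ≤ ∑ D ∈ powersetCard d (univ : Finset V), P * ((All D).card : ℝ) := sum_le_sum hbad
      _ = P * (Tot.card * s.choose d) := by
          rw [← mul_sum]; congr 1; exact_mod_cast hAll
      _ ≤ P * (Tot.card * (s:ℝ)^d) := by
          have : (s.choose d : ℝ) ≤ (s:ℝ)^d := by exact_mod_cast Nat.choose_le_pow s d
          gcongr
      _ = ((s:ℝ)^d * P) * Tot.card := by ring
      _ ≤ _ := by
          have := hs1 s hss1
          gcongr
  linarith
end

section
/- Let V be a finite set of size n, let 1 ≤ s ≤ n, let h be a real-valued function on the s-element subsets of V, and let K > 0 be such that |h(S) − h(S')| ≤ K for all s-element subsets S, S' ⊆ V with |S ∩ S'| = s − 1. Let μ be the average of h over all s-element subsets of V, i.e. μ = (∑_S h(S)) / binom(n,s). Then for every real ℓ > 0, the number of s-element subsets S ⊆ V with |h(S) − μ| ≥ ℓ is at most 2·exp(−ℓ²/(2·min{s, n−s}·K²))·binom(n,s). -/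
open Finset in
lemma hoeff {V : Type*} (A : Finset V) (hA : A.Nonempty) (f : V → ℝ) (K : ℝ) (hK : 0 < K)
    (hf : ∀ v ∈ A, ∀ w ∈ A, |f v - f w| ≤ K) (t : ℝ) :
    ∑ v ∈ A, Real.exp (t * f v) ≤
      (A.card : ℝ) * Real.exp (t ^ 2 * K ^ 2 / 2) * Real.exp (t * ((∑ v ∈ A, f v) / A.card)) := by
  have hc : (0 : ℝ) < A.card := by exact_mod_cast hA.card_pos
  set m := (∑ v ∈ A, f v) / (A.card : ℝ) with hm
  have hm' : ∑ v ∈ A, f v = A.card * m := by rw [hm]; field_simp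
  have hdev : ∀ v ∈ A, |f v - m| ≤ K := by
    intro v hv
    have h1 : (A.card : ℝ) * (f v - m) = ∑ w ∈ A, (f v - f w) := by
      rw [Finset.sum_sub_distrib, hm']; simp; ring
    have h2 : |(A.card : ℝ) * (f v - m)| ≤ A.card * K := by
      rw [h1]
      refine (Finset.abs_sum_le_sum_abs _ _).trans ?_
      refine (Finset.sum_le_card_nsmul _ _ K (fun w hw => hf v hv w hw)).trans ?_
      simp
    rw [abs_mul, abs_of_pos hc] at h2
    exact le_of_mul_le_mul_left h2 hc
  have hpt : ∀ v ∈ A, Real.exp (t * f v) ≤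
      Real.exp (t * m) * (Real.cosh (t * K) + (f v - m) / K * Real.sinh (t * K)) := by
    intro v hv
    have h1 : |(f v - m) / K| ≤ 1 := by
      rw [abs_div, abs_of_pos hK, div_le_one hK]; exact hdev v hv
    have h2 := Real.exp_mul_le_cosh_add_mul_sinh h1 (t * K)
    have h3 : t * f v = t * m + (f v - m) / K * (t * K) := by field_simp; ring
    rw [h3, Real.exp_add]
    gcongr
  refine (Finset.sum_le_sum hpt).trans ?_
  rw [← Finset.mul_sum, Finset.sum_add_distrib, ← Finset.sum_mul, ← Finset.sum_div,
    Finset.sum_sub_distrib, hm']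
  have := Real.cosh_le_exp_half_sq (t * K)
  rw [mul_pow] at this
  rw [Finset.sum_const, Finset.sum_const, nsmul_eq_mul, nsmul_eq_mul, _root_.sub_self,
    _root_.zero_div, MulZeroClass.zero_mul, _root_.add_zero, mul_comm]
  exact mul_le_mul_of_nonneg_right (mul_le_mul_of_nonneg_left this hc.le) (Real.exp_pos _).le

open Finset in
lemma dcount {V : Type*} [DecidableEq V] (A : Finset V) (s : ℕ) (f : Finset V → ℝ) :
    ∑ v ∈ A, ∑ T ∈ (A.erase v).powersetCard s, f (insert v T) =
      (s + 1 : ℝ) * ∑ S ∈ A.powersetCard (s + 1), f S := by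
  have h1 : (s + 1 : ℝ) * ∑ S ∈ A.powersetCard (s + 1), f S =
      ∑ S ∈ A.powersetCard (s + 1), ∑ v ∈ S, f S := by
    rw [Finset.mul_sum]
    refine Finset.sum_congr rfl fun S hS => ?_
    rw [Finset.mem_powersetCard] at hS
    simp [hS.2]
  rw [h1, Finset.sum_sigma', Finset.sum_sigma']
  refine Finset.sum_bij' (fun x _ => ⟨insert x.1 x.2, x.1⟩) (fun x _ => ⟨x.2, x.1.erase x.2⟩)
    ?_ ?_ ?_ ?_ ?_
  · rintro ⟨v, T⟩ hx
    simp only [mem_sigma, mem_powersetCard, subset_erase] at hx ⊢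
    refine ⟨⟨Finset.insert_subset hx.1 hx.2.1.1, ?_⟩, by simp⟩
    rw [Finset.card_insert_of_notMem hx.2.1.2, hx.2.2]
  · rintro ⟨S, v⟩ hx
    simp only [mem_sigma, mem_powersetCard] at hx ⊢
    refine ⟨hx.1.1 hx.2, Finset.erase_subset_erase _ hx.1.1, ?_⟩
    rw [Finset.card_erase_of_mem hx.2, hx.1.2]; simp
  · rintro ⟨v, T⟩ hx
    simp only [mem_sigma, mem_powersetCard, subset_erase] at hx ⊢
    rw [Finset.erase_insert hx.2.1.2]
  · rintro ⟨S, v⟩ hx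
    simp only [mem_sigma, mem_powersetCard] at hx ⊢
    rw [Finset.insert_erase hx.2]
  · rintro ⟨v, T⟩ hx; rfl

open Finset in
lemma swap_diff {V : Type*} [DecidableEq V] (A : Finset V) (s : ℕ) (h : Finset V → ℝ) (K : ℝ)
    (hK : 0 < K)
    (hL : ∀ S ∈ A.powersetCard (s + 1), ∀ S' ∈ A.powersetCard (s + 1),
      (S ∩ S').card = s → |h S - h S'| ≤ K) (v w : V) (hv : v ∈ A) (hw : w ∈ A) :
    |∑ T ∈ (A.erase v).powersetCard s, h (insert v T) -
      ∑ T ∈ (A.erase w).powersetCard s, h (insert w T)| ≤ ((A.card - 1).choose s : ℝ) * K := by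
  by_cases hvw : v = w
  · subst hvw; simp; positivity
  have hsw : (Equiv.swap v w) '' (A.erase v : Set V) = (A.erase w : Set V) := by
    ext x
    simp only [Set.mem_image, mem_coe, mem_erase]
    constructor
    · rintro ⟨y, ⟨hy, hyA⟩, rfl⟩
      rw [Equiv.swap_apply_def]; split_ifs <;> grind
    · rintro ⟨hx, hxA⟩
      refine ⟨Equiv.swap v w x, ?_, by simp⟩
      rw [Equiv.swap_apply_def]; split_ifs <;> grind
  have hsw' : (A.erase v).map (Equiv.swap v w).toEmbedding = A.erase w := by
    apply Finset.coe_injective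
    rw [Finset.coe_map]; exact hsw
  have e : ∑ T ∈ (A.erase w).powersetCard s, h (insert w T) =
      ∑ T ∈ (A.erase v).powersetCard s, h (insert w (T.map (Equiv.swap v w).toEmbedding)) := by
    rw [← hsw', Finset.powersetCard_map, Finset.sum_map]
    rfl
  rw [e, ← Finset.sum_sub_distrib]
  refine (Finset.abs_sum_le_sum_abs _ _).trans ?_
  refine (Finset.sum_le_card_nsmul _ _ K ?_).trans ?_
  · intro T hT
    rw [mem_powersetCard, subset_erase] at hT
    obtain ⟨⟨hTA, hvT⟩, hTs⟩ := hT
    by_cases hwT : w ∈ T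
    · have : insert w (T.map (Equiv.swap v w).toEmbedding) = insert v T := by
        ext x
        simp only [mem_insert, mem_map_equiv, Equiv.symm_swap]
        rw [Equiv.swap_apply_def]; split_ifs <;> grind
      rw [this]; simpa using hK.le
    · have : T.map (Equiv.swap v w).toEmbedding = T := by
        ext x
        simp only [mem_map_equiv, Equiv.symm_swap]
        rw [Equiv.swap_apply_def]; split_ifs <;> grind
      rw [this]
      apply hL
      · rw [mem_powersetCard, card_insert_of_notMem hvT]
        exact ⟨insert_subset hv hTA, by omega⟩
      · rw [mem_powersetCard, card_insert_of_notMem hwT]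
        exact ⟨insert_subset hw hTA, by omega⟩
      · rw [← hTs]; congr 1
        ext x; grind
  · rw [card_powersetCard, card_erase_of_mem hv, nsmul_eq_mul]

open Finset in
lemma mgf {V : Type*} [DecidableEq V] (K : ℝ) (hK : 0 < K) (t : ℝ) (s : ℕ) :
    ∀ (A : Finset V) (h : Finset V → ℝ), s ≤ A.card →
    (∀ S ∈ A.powersetCard s, ∀ S' ∈ A.powersetCard s,
      (S ∩ S').card + 1 = s → |h S - h S'| ≤ K) →
    ∑ S ∈ A.powersetCard s, Real.exp (t * h S) ≤
      (A.card.choose s : ℝ) * Real.exp (s * (t ^ 2 * K ^ 2 / 2)) *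
        Real.exp (t * ((∑ S ∈ A.powersetCard s, h S) / (A.card.choose s : ℝ))) := by
  induction s with
  | zero => intro A h _ _; simp
  | succ s ih =>
    intro A h hsA hL
    have hA : A.Nonempty := by rw [← card_pos]; omega
    have ha : (0 : ℝ) < A.card := by exact_mod_cast hA.card_pos
    set c : ℝ := ((A.card - 1).choose s : ℝ) with hc
    have hcpos : 0 < c := by
      rw [hc]; exact_mod_cast Nat.choose_pos (by omega)
    have hCpos : (0 : ℝ) < (A.card.choose (s + 1) : ℝ) := by
      exact_mod_cast Nat.choose_pos hsA
    have hac : (A.card : ℝ) * c = (s + 1) * (A.card.choose (s + 1) : ℝ) := by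
      have := Nat.add_one_mul_choose_eq (A.card - 1) s
      rw [Nat.sub_add_cancel hA.card_pos] at this
      rw [hc]; rw [mul_comm ((s : ℝ) + 1)]; exact_mod_cast this
    set g : V → ℝ := fun v => (∑ T ∈ (A.erase v).powersetCard s, h (insert v T)) / c with hg
    have hgm : (∑ v ∈ A, g v) / A.card =
        (∑ S ∈ A.powersetCard (s + 1), h S) / (A.card.choose (s + 1) : ℝ) := by
      rw [hg, ← Finset.sum_div, dcount, div_div, mul_comm c, hac]
      have : (s + 1 : ℝ) ≠ 0 := by positivity
      rw [mul_div_mul_left _ _ this]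
    have hgd : ∀ v ∈ A, ∀ w ∈ A, |g v - g w| ≤ K := by
      intro v hv w hw
      have := swap_diff A s h K hK (fun S hS S' hS' hi => hL S hS S' hS' (by omega)) v w hv hw
      rw [hg]; simp only
      rw [← sub_div, abs_div, abs_of_pos hcpos, div_le_iff₀ hcpos, mul_comm]
      exact this
    have hho := hoeff A hA g K hK hgd t
    rw [hgm] at hho
    have hstep : ∀ v ∈ A, ∑ T ∈ (A.erase v).powersetCard s, Real.exp (t * h (insert v T)) ≤
        c * Real.exp (s * (t ^ 2 * K ^ 2 / 2)) * Real.exp (t * g v) := by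
      intro v hv
      have := ih (A.erase v) (fun T => h (insert v T)) (by rw [card_erase_of_mem hv]; omega) ?_
      · rw [card_erase_of_mem hv] at this
        exact this
      · intro S hS S' hS' hi
        rw [mem_powersetCard, subset_erase] at hS hS'
        apply hL
        · rw [mem_powersetCard, card_insert_of_notMem hS.1.2]
          exact ⟨insert_subset hv hS.1.1, by omega⟩
        · rw [mem_powersetCard, card_insert_of_notMem hS'.1.2]
          exact ⟨insert_subset hv hS'.1.1, by omega⟩
        · rw [← insert_inter_distrib, card_insert_of_notMem, hi]
          grind
    have hsum := Finset.sum_le_sum hstep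
    rw [dcount A s (fun S => Real.exp (t * h S)), ← Finset.mul_sum] at hsum
    have hs0 : (0 : ℝ) < s + 1 := by positivity
    refine le_of_mul_le_mul_left (hsum.trans ?_) hs0
    refine (mul_le_mul_of_nonneg_left hho (by positivity)).trans (le_of_eq ?_)
    have e1 : Real.exp (((s + 1 : ℕ) : ℝ) * (t ^ 2 * K ^ 2 / 2)) =
        Real.exp (s * (t ^ 2 * K ^ 2 / 2)) * Real.exp (t ^ 2 * K ^ 2 / 2) := by
      rw [← Real.exp_add]; push_cast; ring_nf
    rw [e1]
    linear_combination (Real.exp (s * (t ^ 2 * K ^ 2 / 2)) * Real.exp (t ^ 2 * K ^ 2 / 2) *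
      Real.exp (t * ((∑ S ∈ A.powersetCard (s + 1), h S) / (A.card.choose (s + 1) : ℝ)))) * hac

open Finset in
lemma oneside {V : Type*} [DecidableEq V] (K : ℝ) (hK : 0 < K) (s : ℕ)
    (A : Finset V) (h : Finset V → ℝ) (hsA : s ≤ A.card)
    (hL : ∀ S ∈ A.powersetCard s, ∀ S' ∈ A.powersetCard s,
      (S ∩ S').card + 1 = s → |h S - h S'| ≤ K) (ℓ : ℝ) (hℓ : 0 < ℓ) :
    (((A.powersetCard s).filter (fun S => ℓ ≤ h S -
      (∑ S ∈ A.powersetCard s, h S) / (A.card.choose s : ℝ))).card : ℝ) ≤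
      Real.exp (-(ℓ^2) / (2 * (s : ℝ) * K^2)) * (A.card.choose s : ℝ) := by
  set m := (∑ S ∈ A.powersetCard s, h S) / (A.card.choose s : ℝ) with hm
  rcases Nat.eq_zero_or_pos s with h0 | h0
  · subst h0
    have := Finset.card_filter_le (A.powersetCard 0) (fun S => ℓ ≤ h S - m)
    rw [card_powersetCard] at this
    simp only [Nat.cast_zero, mul_zero, zero_mul, div_zero, Real.exp_zero, one_mul]
    exact_mod_cast this
  have hs : (0 : ℝ) < s := by exact_mod_cast h0
  set t := ℓ / (s * K ^ 2) with ht
  have htpos : 0 < t := by positivity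
  have key := mgf K hK t s A h hsA hL
  rw [← hm] at key
  have h1 : (((A.powersetCard s).filter (fun S => ℓ ≤ h S - m)).card : ℝ) * Real.exp (t * (m + ℓ))
      ≤ ∑ S ∈ A.powersetCard s, Real.exp (t * h S) := by
    refine le_trans ?_ (Finset.sum_le_sum_of_subset_of_nonneg
      (Finset.filter_subset (fun S => ℓ ≤ h S - m) _) (fun _ _ _ => (Real.exp_pos _).le))
    rw [← nsmul_eq_mul]
    refine Finset.card_nsmul_le_sum _ _ _ ?_
    intro S hS
    rw [mem_filter] at hS
    apply Real.exp_le_exp.2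
    apply mul_le_mul_of_nonneg_left _ htpos.le
    linarith [hS.2]
  have h2 := h1.trans key
  refine le_of_mul_le_mul_right (h2.trans (le_of_eq ?_)) (Real.exp_pos (t * (m + ℓ)))
  rw [mul_assoc, ← Real.exp_add, mul_comm (Real.exp (-ℓ ^ 2 / _)), mul_assoc, ← Real.exp_add]
  congr 2
  rw [ht]; field_simp; ring

open Finset in
lemma twoside {V : Type*} [DecidableEq V] (K : ℝ) (hK : 0 < K) (s : ℕ)
    (A : Finset V) (h : Finset V → ℝ) (hsA : s ≤ A.card)
    (hL : ∀ S ∈ A.powersetCard s, ∀ S' ∈ A.powersetCard s,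
      (S ∩ S').card + 1 = s → |h S - h S'| ≤ K) (ℓ : ℝ) (hℓ : 0 < ℓ) :
    (((A.powersetCard s).filter (fun S => ℓ ≤ |h S -
      (∑ S ∈ A.powersetCard s, h S) / (A.card.choose s : ℝ)|)).card : ℝ) ≤
      2 * Real.exp (-(ℓ^2) / (2 * (s : ℝ) * K^2)) * (A.card.choose s : ℝ) := by
  have h1 := oneside K hK s A h hsA hL ℓ hℓ
  have h2 := oneside K hK s A (fun S => - h S) hsA
    (fun S hS S' hS' hi => by
      have := hL S hS S' hS' hi
      rw [abs_sub_comm] at this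
      rwa [neg_sub_neg]) ℓ hℓ
  simp only [Finset.sum_neg_distrib, neg_div] at h1 h2
  set m := (∑ S ∈ A.powersetCard s, h S) / (A.card.choose s : ℝ) with hm
  have h3 : (A.powersetCard s).filter (fun S => ℓ ≤ |h S - m|) ⊆
      (A.powersetCard s).filter (fun S => ℓ ≤ h S - m) ∪
      (A.powersetCard s).filter (fun S => ℓ ≤ - h S - -m) := by
    intro S hS
    rw [mem_union, mem_filter, mem_filter]
    rw [mem_filter] at hS
    rcases le_abs.1 hS.2 with h | h
    · exact Or.inl ⟨hS.1, h⟩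
    · exact Or.inr ⟨hS.1, by linarith⟩
  have h4 := (Finset.card_le_card h3).trans (Finset.card_union_le _ _)
  have h5 : (((A.powersetCard s).filter (fun S => ℓ ≤ |h S - m|)).card : ℝ) ≤
      (((A.powersetCard s).filter (fun S => ℓ ≤ h S - m)).card : ℝ) +
      (((A.powersetCard s).filter (fun S => ℓ ≤ - h S - -m)).card : ℝ) := by exact_mod_cast h4
  rw [neg_div]
  linarith

/-- Let `V` be an `n`-set, `1 ≤ s ≤ n`, `h` a real function on `s`-subsets of
`V` and `K > 0` with `|h S − h S'| ≤ K` whenever `|S ∩ S'| = s−1`. Let `μ` be the average of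
`h` over all `s`-subsets. Then for every `ℓ > 0`, the number of `s`-subsets `S` with
`|h S − μ| ≥ ℓ` is at most `2·exp(−ℓ²/(2·min{s, n−s}·K²))·C(n,s)`. -/
theorem stmt_16 {V : Type*} [Fintype V] [DecidableEq V] (n s : ℕ)
    (hn : Fintype.card V = n) (hs1 : 1 ≤ s) (hsn : s ≤ n)
    (h : Finset V → ℝ) (K : ℝ) (hK : 0 < K)
    (hLip : ∀ S S' : Finset V, S.card = s → S'.card = s → (S ∩ S').card = s - 1 →
      |h S - h S'| ≤ K)
    (μ : ℝ) (hμ : μ = (∑ S ∈ Finset.univ.powersetCard s, h S) / (n.choose s : ℝ))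
    (ℓ : ℝ) (hℓ : 0 < ℓ) :
    (({S : Finset V | S.card = s ∧ ℓ ≤ |h S - μ|} : Set (Finset V)).ncard : ℝ) ≤
      2 * Real.exp (-(ℓ^2) / (2 * ((min s (n - s) : ℕ) : ℝ) * K^2)) * (n.choose s : ℝ) := by
  classical
  subst hn
  have hset : ({S : Finset V | S.card = s ∧ ℓ ≤ |h S - μ|} : Set (Finset V)) =
      ((((Finset.univ : Finset V).powersetCard s).filter (fun S => ℓ ≤ |h S - μ|) :
        Finset (Finset V)) : Set (Finset V)) := by
    ext S; simp [Finset.mem_powersetCard]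
  rw [hset, Set.ncard_coe_finset]
  rcases le_total s (Fintype.card V - s) with hle | hle
  · rw [min_eq_left hle]
    have := twoside K hK s (Finset.univ : Finset V) h (by simpa using hsn)
      (fun S hS S' hS' hi => hLip S S' (Finset.mem_powersetCard.1 hS).2
        (Finset.mem_powersetCard.1 hS').2 (by omega)) ℓ hℓ
    rw [Finset.card_univ, ← hμ] at this
    exact this
  · rw [min_eq_right hle]
    have hmap : (Finset.univ : Finset V).powersetCard s =
        ((Finset.univ : Finset V).powersetCard (Fintype.card V - s)).map
          ⟨compl, compl_injective⟩ := by
      ext S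
      simp only [Finset.mem_powersetCard, Finset.mem_map, Function.Embedding.coeFn_mk,
        Finset.subset_univ, true_and]
      constructor
      · intro hS
        exact ⟨Sᶜ, by rw [Finset.card_compl, hS], compl_compl S⟩
      · rintro ⟨T, hT, rfl⟩
        rw [Finset.card_compl, hT]; omega
    have := twoside K hK (Fintype.card V - s) (Finset.univ : Finset V) (fun S => h Sᶜ)
      (by simp)
      (fun S hS S' hS' hi => by
        have a := (Finset.mem_powersetCard.1 hS).2
        have b := (Finset.mem_powersetCard.1 hS').2
        have c := Finset.card_union_add_card_inter S S'
        apply hLip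
        · rw [Finset.card_compl]; omega
        · rw [Finset.card_compl]; omega
        · rw [← Finset.compl_union, Finset.card_compl]; omega) ℓ hℓ
    rw [Finset.card_univ, Nat.choose_symm hsn] at this
    have hs : ∑ S ∈ (Finset.univ : Finset V).powersetCard s, h S =
        ∑ S ∈ (Finset.univ : Finset V).powersetCard (Fintype.card V - s), h Sᶜ := by
      rw [hmap, Finset.sum_map]; rfl
    rw [← hs, ← hμ] at this
    rw [hmap, Finset.filter_map, Finset.card_map]
    exact this
end

section
/- For every integer s ≥ 2 and all reals d, ε, η ∈ (0,1) there exists m0 such that the following holds for every integer m ≥ m0, where α = exp(−ε^{−2s}). Let V_1, …, V_s be pairwise disjoint m-element sets and let P be an s-graph whose edges each contain exactly one vertex from each V_i, with e(P) ≥ d·m^s. Then there exist an integer m1 with α·η·m ≤ m1 ≤ η·m and sets U_i ⊆ V_i with |U_i| = m1 for every i ∈ {1, …, s}, such that for all X_1 ⊆ U_1, …, X_s ⊆ U_s with |X_i| ≥ ε·m1 for every i, the number of edges of P with one vertex in each X_i is at least (d − ε)·|X_1|·|X_2|·…·|X_s|. -/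
open Finset in
/-- weighted count of indices whose tuple lies in the box `X`. -/
noncomputable def boxN {β V : Type} [DecidableEq V] {s : ℕ} (F : Finset β)
    (x : β → Fin s → V) (X : Fin s → Finset V) : ℝ :=
  ∑ e ∈ F, ∏ i, if x e i ∈ X i then (1 : ℝ) else 0

lemma boxN_eq_card {β V : Type} [DecidableEq V] {s : ℕ} (F : Finset β)
    (x : β → Fin s → V) (X : Fin s → Finset V) :
    boxN F x X = ((F.filter (fun e => ∀ i, x e i ∈ X i)).card : ℝ) := by
  classical
  unfold boxN
  rw [Finset.card_filter]
  push_cast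
  refine Finset.sum_congr rfl fun e _ => ?_
  rw [Finset.prod_ite_zero]
  simp

lemma sum_mem_powersetCard {V : Type} [DecidableEq V] (X : Finset V) (k : ℕ) (v : V) :
    (X.card : ℝ) * ∑ Y ∈ X.powersetCard k, (if v ∈ Y then (1 : ℝ) else 0)
      = (X.card.choose k : ℝ) * k * (if v ∈ X then 1 else 0) := by
  by_cases hv : v ∈ X
  · have key : ((X.powersetCard k).filter (fun Y => v ∈ Y)).card * X.card = X.card.choose k * k := by
      obtain _ | k := k
      · simp only [Finset.powersetCard_zero, mul_zero, mul_eq_zero, Finset.card_eq_zero]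
        left
        ext Y
        simp
        rintro rfl
        simp
      · have h1 : (X.powersetCard (k+1)).filter (fun Y => v ∈ Y)
            = ((X.erase v).powersetCard k).image (insert v) := by
          ext Y
          simp only [Finset.mem_filter, Finset.mem_powersetCard, Finset.mem_image]
          constructor
          · rintro ⟨⟨h, hc⟩, hvY⟩
            refine ⟨Y.erase v, ⟨Finset.erase_subset_erase _ h, ?_⟩, Finset.insert_erase hvY⟩
            rw [Finset.card_erase_of_mem hvY, hc]; rfl
          · rintro ⟨Z, ⟨h, hc⟩, rfl⟩
            have hvZ : v ∉ Z := fun hh => by simpa using h hh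
            refine ⟨⟨Finset.insert_subset hv (h.trans (Finset.erase_subset _ _)), ?_⟩, by simp⟩
            rw [Finset.card_insert_of_notMem hvZ, hc]
        rw [h1, Finset.card_image_of_injOn, Finset.card_powersetCard, Finset.card_erase_of_mem hv]
        · obtain ⟨n, hn⟩ : ∃ n, X.card = n + 1 :=
            ⟨X.card - 1, by have := Finset.card_pos.2 ⟨v, hv⟩; omega⟩
          rw [hn]
          have := Nat.add_one_mul_choose_eq n k
          simp only [Nat.add_sub_cancel]
          linarith
        · intro Y hY Z hZ h
          simp only [Finset.mem_coe, Finset.mem_powersetCard] at hY hZ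
          have a : v ∉ Y := fun hh => by simpa using hY.1 hh
          have b : v ∉ Z := fun hh => by simpa using hZ.1 hh
          have := congrArg (fun W => Finset.erase W v) h
          simpa [Finset.erase_insert a, Finset.erase_insert b] using this
    rw [Finset.sum_boole, if_pos hv, mul_one, mul_comm]
    exact_mod_cast key
  · rw [if_neg hv, mul_zero, Finset.sum_eq_zero, mul_zero]
    intro Y hY
    rw [if_neg]
    exact fun h => hv ((Finset.mem_powersetCard.1 hY).1 h)

lemma boxN_avg {β V : Type} [DecidableEq V] {s : ℕ} (F : Finset β)
    (x : β → Fin s → V) (X : Fin s → Finset V) (k : ℕ) :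
    (∏ i, ((X i).card : ℝ)) *
      ∑ Y ∈ Fintype.piFinset (fun i => (X i).powersetCard k), boxN F x Y
      = (∏ i, ((X i).card.choose k : ℝ)) * (k : ℝ) ^ s * boxN F x X := by
  unfold boxN
  rw [Finset.sum_comm, Finset.mul_sum, Finset.mul_sum]
  refine Finset.sum_congr rfl fun e _ => ?_
  have := Finset.prod_univ_sum (fun i => (X i).powersetCard k)
    (fun i (Y : Finset V) => if x e i ∈ Y then (1 : ℝ) else 0)
  rw [← this, ← Finset.prod_mul_distrib]
  have h2 : ((k : ℝ) ^ s) = ∏ _i : Fin s, (k : ℝ) := by simp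
  rw [h2, ← Finset.prod_mul_distrib, ← Finset.prod_mul_distrib]
  exact Finset.prod_congr rfl fun i _ => sum_mem_powersetCard _ _ _

lemma sample_ge {β V : Type} [DecidableEq V] {s : ℕ} (F : Finset β)
    (x : β → Fin s → V) (X : Fin s → Finset V) (k : ℕ) (hk : ∀ i, k ≤ (X i).card) :
    ∃ Y : Fin s → Finset V, (∀ i, Y i ⊆ X i ∧ (Y i).card = k) ∧
      (k : ℝ) ^ s * boxN F x X ≤ (∏ i, ((X i).card : ℝ)) * boxN F x Y := by
  have hne : (Fintype.piFinset (fun i => (X i).powersetCard k)).Nonempty := by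
    rw [Fintype.piFinset_nonempty]
    exact fun i => Finset.powersetCard_nonempty.2 (hk i)
  obtain ⟨Y, hY, h⟩ := Finset.exists_le_of_sum_le (f := fun _ => (k : ℝ) ^ s * boxN F x X)
    (g := fun Y => (∏ i, ((X i).card : ℝ)) * boxN F x Y) hne (by
      rw [← Finset.mul_sum, ← Finset.mul_sum, boxN_avg]
      simp only [Finset.sum_const, Fintype.card_piFinset, Finset.card_powersetCard, nsmul_eq_mul]
      push_cast
      exact le_of_eq (by ring))
  refine ⟨Y, fun i => ?_, h⟩
  exact Finset.mem_powersetCard.1 (Fintype.mem_piFinset.1 hY i)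

lemma sample_le {β V : Type} [DecidableEq V] {s : ℕ} (F : Finset β)
    (x : β → Fin s → V) (X : Fin s → Finset V) (k : ℕ) (hk : ∀ i, k ≤ (X i).card) :
    ∃ Y : Fin s → Finset V, (∀ i, Y i ⊆ X i ∧ (Y i).card = k) ∧
      (∏ i, ((X i).card : ℝ)) * boxN F x Y ≤ (k : ℝ) ^ s * boxN F x X := by
  have hne : (Fintype.piFinset (fun i => (X i).powersetCard k)).Nonempty := by
    rw [Fintype.piFinset_nonempty]
    exact fun i => Finset.powersetCard_nonempty.2 (hk i)
  obtain ⟨Y, hY, h⟩ := Finset.exists_le_of_sum_le (g := fun _ => (k : ℝ) ^ s * boxN F x X)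
    (f := fun Y => (∏ i, ((X i).card : ℝ)) * boxN F x Y) hne (by
      rw [← Finset.mul_sum, boxN_avg]
      simp [Fintype.card_piFinset, mul_assoc])
  refine ⟨Y, fun i => ?_, h⟩
  exact Finset.mem_powersetCard.1 (Fintype.mem_piFinset.1 hY i)

lemma boxN_split {β V : Type} [DecidableEq V] {s : ℕ} (F : Finset β)
    (x : β → Fin s → V) (U X : Fin s → Finset V) (hX : ∀ i, X i ⊆ U i) :
    boxN F x U = ∑ S : Finset (Fin s),
      boxN F x (fun i => if i ∈ S then X i else U i \ X i) := by
  unfold boxN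
  rw [Finset.sum_comm]
  refine Finset.sum_congr rfl fun e _ => ?_
  have h : ∀ i, (if x e i ∈ U i then (1 : ℝ) else 0)
      = (if x e i ∈ X i then (1 : ℝ) else 0) + (if x e i ∈ U i \ X i then (1 : ℝ) else 0) := by
    intro i
    have := @hX i (x e i)
    by_cases h1 : x e i ∈ X i <;> by_cases h2 : x e i ∈ U i <;> simp_all
  rw [Finset.prod_congr rfl (fun i _ => h i), Finset.prod_add, Finset.powerset_univ]
  refine Finset.sum_congr rfl fun S _ => ?_
  rw [← Finset.prod_mul_prod_compl S (fun i => if x e i ∈ (if i ∈ S then X i else U i \ X i) then (1:ℝ) else 0)]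
  congr 1
  · exact Finset.prod_congr rfl fun i hi => by simp only [if_pos hi]
  · rw [← Finset.compl_eq_univ_sdiff]
    exact Finset.prod_congr rfl fun i hi => by simp only [if_neg (Finset.mem_compl.1 hi)]

lemma card_split {V : Type} [DecidableEq V] {s : ℕ}
    (U X : Fin s → Finset V) (hX : ∀ i, X i ⊆ U i) :
    ∏ i, ((U i).card : ℝ) = ∑ S : Finset (Fin s),
      ∏ i, ((if i ∈ S then X i else U i \ X i).card : ℝ) := by
  have h : ∀ i, ((U i).card : ℝ) = ((X i).card : ℝ) + ((U i \ X i).card : ℝ) := by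
    intro i
    rw [← Finset.card_sdiff_add_card_eq_card (hX i)]
    push_cast; ring
  rw [Finset.prod_congr rfl (fun i _ => h i), Finset.prod_add, Finset.powerset_univ]
  refine Finset.sum_congr rfl fun S _ => ?_
  rw [← Finset.prod_mul_prod_compl S (fun i => ((if i ∈ S then X i else U i \ X i).card : ℝ))]
  congr 1
  · exact Finset.prod_congr rfl fun i hi => by simp only [if_pos hi]
  · rw [← Finset.compl_eq_univ_sdiff]
    exact Finset.prod_congr rfl fun i hi => by simp only [if_neg (Finset.mem_compl.1 hi)]

lemma increment {β V : Type} [DecidableEq V] {s : ℕ} (F : Finset β)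
    (x : β → Fin s → V) (d D ε : ℝ) (hε0 : 0 < ε) (hD : d ≤ D) (hDε : 0 ≤ D)
    (n k : ℕ) (hk : ε * n ≤ k) (l : ℕ) (hl0 : 0 < l) (hlk : l ≤ k) (hlnk : l + k ≤ n)
    (U X : Fin s → Finset V) (hU : ∀ i, (U i).card = n) (hX : ∀ i, X i ⊆ U i)
    (hXc : ∀ i, (X i).card = k) (hN : D * (n : ℝ) ^ s ≤ boxN F x U)
    (hNX : boxN F x X < (d - ε) * (k : ℝ) ^ s) :
    ∃ Y : Fin s → Finset V, (∀ i, Y i ⊆ U i ∧ (Y i).card = l) ∧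
      (D + ε ^ (s + 1)) * (l : ℝ) ^ s ≤ boxN F x Y := by
  set Z : Finset (Fin s) → Fin s → Finset V := fun S i => if i ∈ S then X i else U i \ X i with hZ
  have hZl : ∀ S i, l ≤ (Z S i).card := by
    intro S i
    simp only [hZ]
    split_ifs
    · rw [hXc]; exact hlk
    · rw [Finset.card_sdiff_of_subset (hX i), hU, hXc]; omega
  have hZU : ∀ S i, Z S i ⊆ U i := by
    intro S i
    simp only [hZ]
    split_ifs
    · exact hX i
    · exact Finset.sdiff_subset
  have hkey : ∃ S, (D + ε ^ (s + 1)) * ∏ i, ((Z S i).card : ℝ) ≤ boxN F x (Z S) := by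
    by_contra! hcon
    have h1 := boxN_split F x U X hX
    have h2 := card_split U X hX
    have hZu : Z Finset.univ = X := by funext i; simp [hZ]
    rw [← Finset.add_sum_erase _ _ (Finset.mem_univ (Finset.univ : Finset (Fin s)))] at h1 h2
    change boxN F x U = boxN F x (Z Finset.univ) + ∑ S ∈ _, boxN F x (Z S) at h1
    change ∏ i, ((U i).card : ℝ) = ∏ i, ((Z Finset.univ i).card : ℝ) + ∑ S ∈ _, ∏ i, ((Z S i).card : ℝ) at h2
    rw [hZu] at h1 h2
    simp only [hU, hXc, Finset.prod_const, Finset.card_univ, Fintype.card_fin] at h2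
    have h3 : ∑ S ∈ Finset.univ.erase Finset.univ, boxN F x (Z S) ≤
        (D + ε ^ (s + 1)) * ∑ S ∈ Finset.univ.erase Finset.univ, ∏ i, ((Z S i).card : ℝ) := by
      rw [Finset.mul_sum]
      exact Finset.sum_le_sum fun S _ => (hcon S).le
    have h4 : ∑ S ∈ Finset.univ.erase Finset.univ, ∏ i, ((Z S i).card : ℝ) = (n : ℝ)^s - (k:ℝ)^s := by
      linarith
    rw [h4] at h3
    have h5 : ε ^ s * (n : ℝ) ^ s ≤ (k : ℝ) ^ s := by
      rw [← mul_pow]; exact pow_le_pow_left₀ (by positivity) hk s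
    have h6 : ε ^ (s + 1) * (n : ℝ) ^ s ≤ ε * (k : ℝ) ^ s := by
      rw [pow_succ']; nlinarith
    have h7 : 0 ≤ ε ^ (s + 1) * (k : ℝ) ^ s := by positivity
    have h8 : 0 ≤ (D - d) * (k : ℝ) ^ s := mul_nonneg (by linarith) (by positivity)
    nlinarith
  obtain ⟨S, hS⟩ := hkey
  obtain ⟨Y, hY, hYN⟩ := sample_ge F x (Z S) l (hZl S)
  refine ⟨Y, fun i => ⟨(hY i).1.trans (hZU S i), (hY i).2⟩, ?_⟩
  have hpos : 0 < ∏ i, ((Z S i).card : ℝ) :=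
    Finset.prod_pos fun i _ => by exact_mod_cast lt_of_lt_of_le hl0 (hZl S i)
  refine le_of_mul_le_mul_left ?_ hpos
  refine le_trans ?_ hYN
  have : 0 ≤ (l : ℝ) ^ s := by positivity
  nlinarith

lemma delta_bound (s : ℕ) (hs : 2 ≤ s) (d ε δ : ℝ) (hε0 : 0 < ε) (hε1 : ε < 1) (hd1 : d < 1)
    (hdε : ε < d) (hδ : δ = min ε (1 - ε)) :
    Real.exp (-(ε ^ (-(2 * (s : ℝ))))) < δ ^ ⌊(1 - d) / ε ^ (s + 1)⌋₊ := by
  have hδ0 : 0 < δ := by rw [hδ]; exact lt_min hε0 (by linarith)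
  have hlog : -Real.log δ < 1 / δ := by
    have := Real.add_one_le_exp (Real.log (1 / δ))
    rw [Real.exp_log (by positivity), one_div, Real.log_inv] at this
    rw [one_div]; linarith
  have hlog0 : 0 ≤ -Real.log δ := by
    have : Real.log δ ≤ 0 := Real.log_nonpos hδ0.le (by rw [hδ]; exact (min_le_left _ _).trans hε1.le)
    linarith
  have hA : (1 - d) * (-Real.log δ) < 1 / ε := by
    rcases le_total ε (1 - ε) with h | h
    · rw [min_eq_left h] at hδ
      subst hδ
      nlinarith
    · rw [min_eq_right h] at hδ
      have h1 : (1 - d) * (-Real.log δ) ≤ δ * (-Real.log δ) :=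
        mul_le_mul_of_nonneg_right (by linarith) hlog0
      have h2 : δ * (-Real.log δ) < δ * (1 / δ) := mul_lt_mul_of_pos_left hlog hδ0
      rw [mul_one_div_cancel hδ0.ne'] at h2
      have h3 : 1 < 1 / ε := by rw [lt_div_iff₀ hε0]; linarith
      linarith
  have hpow : ε ^ (-(2 * (s : ℝ))) = 1 / ε ^ (2 * s) := by
    rw [Real.rpow_neg hε0.le, one_div]
    congr 1
    rw [← Real.rpow_natCast]; push_cast; rfl
  rw [hpow, ← Real.exp_log (pow_pos hδ0 _), Real.exp_lt_exp, Real.log_pow]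
  have hfl : ((⌊(1 - d) / ε ^ (s + 1)⌋₊ : ℕ) : ℝ) ≤ (1 - d) / ε ^ (s + 1) :=
    Nat.floor_le (div_nonneg (by linarith) (by positivity))
  have h1 := mul_le_mul_of_nonneg_right hfl hlog0
  have h2 : (1 - d) / ε ^ (s + 1) * (-Real.log δ) < 1 / ε / ε ^ (s + 1) := by
    rw [div_mul_eq_mul_div]
    exact div_lt_div_of_pos_right hA (by positivity)
  have h3 : 1 / ε / ε ^ (s + 1) ≤ 1 / ε ^ (2 * s) := by
    rw [div_div, ← pow_succ']
    exact one_div_le_one_div_of_le (by positivity)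
      (pow_le_pow_of_le_one hε0.le hε1.le (by omega))
  linarith

lemma core {β V : Type} [DecidableEq V] {s : ℕ} (F : Finset β)
    (x : β → Fin s → V) (d ε η δ : ℝ) (K m : ℕ) (A : Fin s → Finset V)
    (hd0 : 0 < d) (hε0 : 0 < ε) (hε1 : ε < 1) (hη0 : 0 < η) (hη1 : η < 1)
    (hδ : δ = min ε (1 - ε)) (hK : K = ⌊(1 - d) / ε ^ (s + 1)⌋₊)
    (a : ℝ) (ha : a ≤ δ ^ K * (η * m) - 2) (hm : 1 < δ * (δ ^ K * (η * m) - 2)) (hm0 : 1 ≤ m)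
    (hA : ∀ i, (A i).card = m)
    (hdens : ∀ X : Fin s → Finset V, (∀ i, X i ⊆ A i) → boxN F x X ≤ ∏ i, ((X i).card : ℝ))
    (hN : d * (m : ℝ) ^ s ≤ boxN F x A) :
    ∃ m1 : ℕ, a ≤ (m1 : ℝ) ∧ (m1 : ℝ) ≤ η * m ∧
      ∃ U : Fin s → Finset V, (∀ i, U i ⊆ A i ∧ (U i).card = m1) ∧
        ∀ X : Fin s → Finset V, (∀ i, X i ⊆ U i) → (∀ i, ε * m1 ≤ ((X i).card : ℝ)) →
          (d - ε) * ∏ i, ((X i).card : ℝ) ≤ boxN F x X := by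
  by_contra! hcon
  have hδ0 : 0 < δ := by rw [hδ]; exact lt_min hε0 (by linarith)
  have hδε : δ ≤ ε := by rw [hδ]; exact min_le_left _ _
  have hδε' : δ ≤ 1 - ε := by rw [hδ]; exact min_le_right _ _
  have hδ2 : δ ≤ 1 / 2 := by linarith
  have hηm : 0 ≤ η * m := by positivity
  have hmR : (0 : ℝ) < (m : ℝ) ^ s := by
    have : (0 : ℝ) < m := by exact_mod_cast hm0
    positivity
  have main : ∀ t : ℕ, t ≤ K + 1 → ∃ n : ℕ, 0 < n ∧ δ ^ t * (η * m) - 2 ≤ n ∧ (n : ℝ) ≤ η * m ∧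
      ∃ U : Fin s → Finset V, (∀ i, U i ⊆ A i ∧ (U i).card = n) ∧
        (d + t * ε ^ (s + 1)) * (n : ℝ) ^ s ≤ boxN F x U := by
    have hge : ∀ t ≤ K, δ ^ K * (η * m) - 2 ≤ δ ^ t * (η * m) - 2 := by
      intro t ht
      have := pow_le_pow_of_le_one hδ0.le (by linarith) ht
      nlinarith
    have hbig : 0 < δ ^ K * (η * m) - 2 := by
      by_contra! h
      nlinarith
    intro t
    induction t with
    | zero =>
      intro _
      have hfl : (⌊η * m⌋₊ : ℝ) ≤ η * m := Nat.floor_le hηm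
      have hlt := Nat.lt_floor_add_one (η * m)
      have hle : ⌊η * m⌋₊ ≤ m := by
        have : (⌊η * m⌋₊ : ℝ) ≤ m := hfl.trans (by nlinarith [(Nat.cast_nonneg m : (0:ℝ) ≤ m)])
        exact_mod_cast this
      obtain ⟨Y, hY, hYN⟩ := sample_ge F x A ⌊η * m⌋₊ (fun i => by rw [hA]; exact hle)
      refine ⟨⌊η * m⌋₊, ?_, by rw [pow_zero]; linarith, hfl, Y, hY, ?_⟩
      · have := hge 0 (Nat.zero_le _)
        rw [pow_zero] at this
        exact_mod_cast (show (0 : ℝ) < ⌊η * m⌋₊ by linarith)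
      · simp only [hA, Finset.prod_const, Finset.card_univ, Fintype.card_fin] at hYN
        refine le_of_mul_le_mul_left ?_ hmR
        refine le_trans ?_ hYN
        have : 0 ≤ (⌊η * m⌋₊ : ℝ) ^ s := by positivity
        simp only [Nat.cast_zero, zero_mul, add_zero]
        nlinarith
    | succ t ih =>
      intro ht
      obtain ⟨n, hn0, hn1, hn2, U, hU, hUN⟩ := ih (by omega)
      have hgt := hge t (by omega)
      obtain ⟨X, hXU, hXc, hXN⟩ := hcon n (by linarith) hn2 U hU
      set k := ⌈ε * n⌉₊ with hk
      have hnR : (0 : ℝ) < n := by exact_mod_cast hn0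
      have hk1 : ε * n ≤ k := Nat.le_ceil _
      have hk2 : (k : ℝ) < ε * n + 1 := Nat.ceil_lt_add_one (by positivity)
      have hδn : 1 < δ * n := by nlinarith
      have hk0 : 0 < k := Nat.ceil_pos.2 (by positivity)
      have hkn : k < n := by
        have : (k : ℝ) < n := by nlinarith
        exact_mod_cast this
      obtain ⟨Y, hY, hYN⟩ := sample_le F x X k (fun i => Nat.ceil_le.2 (hXc i))
      have hpos : 0 < ∏ i, ((X i).card : ℝ) :=
        Finset.prod_pos fun i _ => lt_of_lt_of_le (by positivity) (hXc i)
      have hkR : (0 : ℝ) < (k : ℝ) ^ s := by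
        have : (0 : ℝ) < k := by exact_mod_cast hk0
        positivity
      have hYlt : boxN F x Y < (d - ε) * (k : ℝ) ^ s := by
        refine lt_of_mul_lt_mul_left ?_ hpos.le
        refine lt_of_le_of_lt hYN ?_
        have := mul_lt_mul_of_pos_left hXN hkR
        linarith
      have hte : 0 ≤ (t : ℝ) * ε ^ (s + 1) := by positivity
      obtain ⟨W, hW, hWN⟩ := increment F x d (d + t * ε ^ (s + 1)) ε hε0 (by linarith) (by linarith)
        n k hk1 (min k (n - k)) (lt_min hk0 (by omega)) (min_le_left _ _)
        (by have := min_le_right k (n - k); omega) U Y (fun i => (hU i).2)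
        (fun i => (hY i).1.trans (hXU i)) (fun i => (hY i).2) hUN hYlt
      refine ⟨min k (n - k), lt_min hk0 (by omega), ?_, ?_, W,
        fun i => ⟨(hW i).1.trans (hU i).1, (hW i).2⟩, ?_⟩
      · rw [Nat.cast_min, Nat.cast_sub hkn.le, pow_succ']
        have h1 := mul_le_mul_of_nonneg_left hn1 hδ0.le
        refine le_min ?_ ?_
        · nlinarith
        · nlinarith
      · refine le_trans ?_ hn2
        have : min k (n - k) ≤ n := (min_le_left _ _).trans hkn.le
        exact_mod_cast this
      · refine le_trans (le_of_eq ?_) hWN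
        push_cast; ring
  obtain ⟨n, hn0, -, -, U, hU, hUN⟩ := main (K + 1) le_rfl
  have h1 := hdens U (fun i => (hU i).1)
  simp only [(hU _).2, Finset.prod_const, Finset.card_univ, Fintype.card_fin] at h1
  have hnR : (0 : ℝ) < n := by exact_mod_cast hn0
  have hns : (0 : ℝ) < (n : ℝ) ^ s := by positivity
  have h2 : (d + (K + 1 : ℕ) * ε ^ (s + 1)) ≤ 1 := by
    refine le_of_mul_le_mul_right ?_ hns
    linarith
  have h3 : (1 - d) / ε ^ (s + 1) < K + 1 := by rw [hK]; exact Nat.lt_floor_add_one _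
  rw [div_lt_iff₀ (by positivity)] at h3
  push_cast at h2
  linarith


/-- For every `s ≥ 2` and `d, ε, η ∈ (0,1)` there is `m0` such that for every
`m ≥ m0` (with `α = exp(−ε^{−2s})`): if `V_1, …, V_s` are pairwise disjoint `m`-sets and `P`
is an `s`-partite `s`-graph on them with `e(P) ≥ d·m^s`, then there exist `m1` with
`α·η·m ≤ m1 ≤ η·m` and sets `U_i ⊆ V_i` with `|U_i| = m1` such that for all `X_i ⊆ U_i` with
`|X_i| ≥ ε·m1`, the number of edges of `P` with one vertex in each `X_i` is at least
`(d − ε)·|X_1|·…·|X_s|`. -/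
theorem stmt_18 (s : ℕ) (hs : 2 ≤ s) (d ε η : ℝ)
    (hd0 : 0 < d) (hd1 : d < 1) (hε0 : 0 < ε) (hε1 : ε < 1) (hη0 : 0 < η) (hη1 : η < 1) :
    ∃ m0 : ℕ, ∀ m : ℕ, m0 ≤ m →
    ∀ (V : Type) [DecidableEq V] (A : Fin s → Finset V),
      (∀ i j, i ≠ j → Disjoint (A i) (A j)) → (∀ i, (A i).card = m) →
    ∀ E : Finset (Finset V),
      (∀ e ∈ E, e.card = s ∧ ∀ i, (e ∩ A i).card = 1) →
      d * (m : ℝ) ^ s ≤ (E.card : ℝ) →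
    ∃ m1 : ℕ,
      Real.exp (-(ε ^ (-(2 * (s : ℝ))))) * η * m ≤ (m1 : ℝ) ∧ (m1 : ℝ) ≤ η * m ∧
      ∃ U : Fin s → Finset V, (∀ i, U i ⊆ A i ∧ (U i).card = m1) ∧
        ∀ X : Fin s → Finset V, (∀ i, X i ⊆ U i) → (∀ i, ε * m1 ≤ ((X i).card : ℝ)) →
          (d - ε) * ∏ i, ((X i).card : ℝ) ≤
            ((E.filter (fun e => ∀ i, (e ∩ X i).Nonempty)).card : ℝ) := by
  classical
  set α := Real.exp (-(ε ^ (-(2 * (s : ℝ))))) with hα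
  have hα1 : α < 1 := by
    rw [hα, Real.exp_lt_one_iff]
    have := Real.rpow_pos_of_pos hε0 (-(2 * (s : ℝ)))
    linarith
  by_cases hdε : d ≤ ε
  · obtain ⟨m0, hm0⟩ := exists_nat_ge (1 / ((1 - α) * η))
    refine ⟨m0, fun m hm V _ A _ hAc E _ _ => ?_⟩
    have hpos : 0 < (1 - α) * η := mul_pos (by linarith) hη0
    have hmm : 1 / ((1 - α) * η) ≤ m := hm0.trans (by exact_mod_cast hm)
    rw [div_le_iff₀ hpos] at hmm
    have hfl : (⌊η * m⌋₊ : ℝ) ≤ η * m := Nat.floor_le (by positivity)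
    have hlt := Nat.lt_floor_add_one (η * m)
    have hle : ⌊η * m⌋₊ ≤ m := by
      have : (⌊η * m⌋₊ : ℝ) ≤ m := hfl.trans (by nlinarith [(Nat.cast_nonneg m : (0:ℝ) ≤ m)])
      exact_mod_cast this
    refine ⟨⌊η * m⌋₊, by nlinarith, hfl, ?_⟩
    choose U hU using fun i => Finset.exists_subset_card_eq (s := A i) (n := ⌊η * m⌋₊)
      (by rw [hAc]; exact hle)
    refine ⟨U, hU, fun X _ _ => ?_⟩
    refine le_trans (mul_nonpos_of_nonpos_of_nonneg (by linarith) ?_) (Nat.cast_nonneg _)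
    exact Finset.prod_nonneg fun i _ => Nat.cast_nonneg _
  · push Not at hdε
    obtain ⟨δ, hδ⟩ : ∃ δ, δ = min ε (1 - ε) := ⟨_, rfl⟩
    obtain ⟨K, hK⟩ : ∃ K, K = ⌊(1 - d) / ε ^ (s + 1)⌋₊ := ⟨_, rfl⟩
    have hb := delta_bound s hs d ε δ hε0 hε1 hd1 hdε hδ
    rw [← hK, ← hα] at hb
    have hδ0 : 0 < δ := by rw [hδ]; exact lt_min hε0 (by linarith)
    obtain ⟨m0, hm0⟩ := exists_nat_ge (2 / ((δ ^ K - α) * η))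
    obtain ⟨m2, hm2⟩ := exists_nat_gt ((1 / δ + 2) / (δ ^ K * η))
    refine ⟨max (max m0 m2) 1, fun m hm V _ A hdisj hAc E hE hEc => ?_⟩
    have hm1 : 1 ≤ m := (le_max_right _ _).trans hm
    have hmm0 : m0 ≤ m := (le_max_left _ _).trans ((le_max_left _ _).trans hm)
    have hmm2 : m2 ≤ m := (le_max_right _ _).trans ((le_max_left _ _).trans hm)
    have hq0 : 2 / ((δ ^ K - α) * η) ≤ m := hm0.trans (by exact_mod_cast hmm0)
    have hq2 : (1 / δ + 2) / (δ ^ K * η) < m := hm2.trans_le (by exact_mod_cast hmm2)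
    rw [div_le_iff₀ (mul_pos (by linarith) hη0)] at hq0
    rw [div_lt_iff₀ (by positivity)] at hq2
    have hc2 : 1 < δ * (δ ^ K * (η * m) - 2) := by
      have : 1 / δ < δ ^ K * (η * m) - 2 := by linarith
      rw [div_lt_iff₀ hδ0] at this
      linarith
    -- representation of edges
    have hx : ∀ e : Finset V, ∀ i, ∃ v, e ∈ E → e ∩ A i = {v} := by
      intro e i
      by_cases he : e ∈ E
      · obtain ⟨v, hv⟩ := Finset.card_eq_one.1 ((hE e he).2 i)
        exact ⟨v, fun _ => hv⟩
      · have hne : (A i).Nonempty := Finset.card_pos.1 (by rw [hAc]; omega)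
        exact ⟨hne.choose, fun h => absurd h he⟩
    choose x hx using hx
    have hxm : ∀ e ∈ E, ∀ i, x e i ∈ e ∧ x e i ∈ A i := by
      intro e he i
      have : x e i ∈ e ∩ A i := by rw [hx e i he]; simp
      exact Finset.mem_inter.1 this
    have hfilter : ∀ X : Fin s → Finset V, (∀ i, X i ⊆ A i) →
        E.filter (fun e => ∀ i, (e ∩ X i).Nonempty) = E.filter (fun e => ∀ i, x e i ∈ X i) := by
      intro X hX
      refine Finset.filter_congr fun e he => forall_congr' fun i => ?_
      constructor
      · rintro ⟨v, hv⟩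
        rw [Finset.mem_inter] at hv
        have h : v ∈ e ∩ A i := Finset.mem_inter.2 ⟨hv.1, hX i hv.2⟩
        rw [hx e i he, Finset.mem_singleton] at h
        rw [← h]; exact hv.2
      · intro h
        exact ⟨x e i, Finset.mem_inter.2 ⟨(hxm e he i).1, h⟩⟩
    have himg : ∀ e ∈ E, Finset.univ.image (x e) = e := by
      intro e he
      refine Finset.eq_of_subset_of_card_le ?_ ?_
      · intro v hv
        obtain ⟨i, -, rfl⟩ := Finset.mem_image.1 hv
        exact (hxm e he i).1
      · rw [(hE e he).1, Finset.card_image_of_injective]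
        · simp
        · intro i j hij
          by_contra hne
          have h1 := (hxm e he i).2
          have h2 := (hxm e he j).2
          rw [← hij] at h2
          exact Finset.disjoint_left.1 (hdisj i j hne) h1 h2
    have hdens : ∀ X : Fin s → Finset V, (∀ i, X i ⊆ A i) →
        boxN E x X ≤ ∏ i, ((X i).card : ℝ) := by
      intro X _
      rw [boxN_eq_card]
      have : (E.filter (fun e => ∀ i, x e i ∈ X i)).card ≤ (Fintype.piFinset X).card := by
        refine Finset.card_le_card_of_injOn x ?_ ?_
        · intro e he
          have he' := Finset.mem_filter.1 (Finset.mem_coe.1 he)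
          exact Finset.mem_coe.2 (Fintype.mem_piFinset.2 he'.2)
        · intro e he f hf h
          have he' := Finset.mem_filter.1 (Finset.mem_coe.1 he)
          have hf' := Finset.mem_filter.1 (Finset.mem_coe.1 hf)
          rw [← himg e he'.1, ← himg f hf'.1, h]
      rw [Fintype.card_piFinset] at this
      exact_mod_cast this
    have hN : d * (m : ℝ) ^ s ≤ boxN E x A := by
      rw [boxN_eq_card, Finset.filter_true_of_mem (fun e he i => (hxm e he i).2)]
      exact hEc
    obtain ⟨m1, h1, h2, U, hU, hX⟩ := core E x d ε η δ K m A hd0 hε0 hε1 hη0 hη1 hδ hK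
      (α * η * m) (by linarith) hc2 hm1 hAc hdens hN
    refine ⟨m1, h1, h2, U, hU, fun X hXU hXc => ?_⟩
    rw [hfilter X (fun i => (hXU i).trans (hU i).1), ← boxN_eq_card]
    exact hX X hXU hXc
end

section
/- For every integer t ≥ 2 and every ε > 0 there exists s0 such that for every integer s ≥ s0 there exists n0 such that the following holds for every n ≥ n0. Let G be a simple graph on an n-element vertex set belonging to DegSeq_{t,ε}. Then for every 2t-element vertex set R, the number of s-element vertex sets S with R ⊆ S such that the induced subgraph G[S] belongs to DegSeq_{t,ε/2} (with s in place of n) is at least (1 − e^{−√s})·binom(n−2t, s−2t). -/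
lemma esymm_le {V : Type} [DecidableEq V] (y : V → ℝ) (hy : ∀ v, 0 ≤ y v) (W : Finset V) :
    ∀ m : ℕ, (m.factorial : ℝ) * ∑ T ∈ W.powersetCard m, ∏ w ∈ T, y w ≤ (∑ w ∈ W, y w) ^ m := by
  induction W using Finset.induction_on with
  | empty =>
    intro m
    cases m with
    | zero => simp
    | succ m => rw [Finset.powersetCard_eq_empty.2 (by simp)]; simp
  | insert a W ha ih =>
    intro m
    cases m with
    | zero => simp
    | succ m =>
      rw [Finset.powersetCard_succ_insert ha, Finset.sum_union, Finset.sum_image]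
      · have h1 : ∑ T ∈ W.powersetCard m, ∏ w ∈ insert a T, y w
            = y a * ∑ T ∈ W.powersetCard m, ∏ w ∈ T, y w := by
          rw [Finset.mul_sum]
          refine Finset.sum_congr rfl fun T hT => ?_
          rw [Finset.prod_insert]
          exact fun h => ha ((Finset.mem_powersetCard.1 hT).1 h)
        rw [h1, Finset.sum_insert ha]
        have i1 := ih (m + 1)
        have i2 := ih m
        set Y := ∑ w ∈ W, y w
        have hY : 0 ≤ Y := Finset.sum_nonneg fun w _ => hy w
        have i3 : Y ^ (m+1) + (m+1) * y a * Y ^ m ≤ (y a + Y) ^ (m+1) := by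
          have := hy a
          generalize y a = x at *
          clear i1 i2 h1 ih
          induction m with
          | zero => simp; linarith
          | succ k ihk =>
            have h0 : 0 ≤ x + Y := by positivity
            have := mul_le_mul_of_nonneg_left ihk h0
            have e : (x + Y) * (Y ^ (k+1) + (k+1) * x * Y ^ k)
              = Y ^ (k+1+1) + ((k+1 : ℕ)+1) * x * Y ^ (k+1) + (k+1) * x^2 * Y^k := by
              push_cast; ring
            have : 0 ≤ (k+1) * x^2 * Y^k := by positivity
            calc _ ≤ (x + Y) * (Y ^ (k+1) + (k+1) * x * Y ^ k) := by rw [e]; linarith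
              _ ≤ _ := by assumption
              _ = _ := by ring
        have i4 := mul_le_mul_of_nonneg_left i2 (show 0 ≤ ((m:ℝ)+1) * y a from mul_nonneg (by positivity) (hy a))
        rw [Nat.factorial_succ] at i1 ⊢
        push_cast at i1 ⊢
        linarith
      · intro T hT T' hT' h
        have n1 : a ∉ T := fun h => ha ((Finset.mem_powersetCard.1 hT).1 h)
        have n2 : a ∉ T' := fun h => ha ((Finset.mem_powersetCard.1 hT').1 h)
        rw [← Finset.erase_insert n1, ← Finset.erase_insert n2]
        exact congrArg (fun X => Finset.erase X a) h
      · rw [Finset.disjoint_left]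
        intro T hT h
        obtain ⟨T', _, rfl⟩ := Finset.mem_image.1 h
        exact ha ((Finset.mem_powersetCard.1 hT).1 (Finset.mem_insert_self _ _))

lemma tail_bound {V : Type} [DecidableEq V] (W A : Finset V) (m : ℕ) (α δ : ℝ) (hAW : A ⊆ W)
    (hW : 0 < W.card) (hN : (W.card : ℝ) ^ m ≤ 2 * (W.card.descFactorial m : ℝ))
    (hA : (A.card : ℝ) ≤ α * W.card) (hα : α ≤ 2) (hδ : 0 < δ) (hδ1 : δ ≤ 1) :
    (((W.powersetCard m).filter (fun T => (α + δ) * m ≤ ((T ∩ A).card : ℝ))).card : ℝ)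
      ≤ 2 * Real.exp (-(δ ^ 2 / 8 * m)) * (W.card.choose m : ℝ) := by
  have hW' : (0:ℝ) < W.card := by exact_mod_cast hW
  have hα0 : 0 ≤ α := by
    by_contra h
    push Not at h
    have : (0:ℝ) ≤ A.card := by positivity
    nlinarith
  set l := δ / 4 with hl
  set y : V → ℝ := fun v => if v ∈ A then Real.exp l else 1 with hy
  have hprod : ∀ T : Finset V, ∏ w ∈ T, y w = Real.exp (l * (T ∩ A).card) := by
    intro T
    rw [hy, Finset.prod_ite]
    simp only [Finset.prod_const, one_pow, mul_one]
    rw [Finset.filter_mem_eq_inter, ← Real.exp_nat_mul, mul_comm]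
  have hsum : ∑ w ∈ W, y w = W.card + A.card * (Real.exp l - 1) := by
    rw [hy, Finset.sum_ite]
    simp only [Finset.sum_const, nsmul_eq_mul, mul_one]
    rw [Finset.filter_mem_eq_inter, Finset.inter_eq_right.2 hAW]
    have : ((W.filter (fun v => v ∉ A)).card : ℝ) = W.card - A.card := by
      rw [Finset.filter_notMem_eq_sdiff, Finset.card_sdiff_of_subset hAW, Nat.cast_sub (Finset.card_le_card hAW)]
    rw [this]; ring
  have hesymm := esymm_le y (fun v => by rw [hy]; dsimp only; split_ifs <;> positivity) W m
  have hl0 : 0 < l := by positivity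
  have hel : Real.exp l - 1 ≤ l + l ^ 2 := by
    have := Real.abs_exp_sub_one_sub_id_le (x := l) (by rw [abs_of_pos hl0]; linarith)
    have := (abs_le.1 this).2
    linarith
  have hel0 : 0 ≤ Real.exp l - 1 := by linarith [Real.add_one_le_exp l]
  have hY : ∑ w ∈ W, y w ≤ W.card * Real.exp (α * (l + l^2)) := by
    rw [hsum]
    calc (W.card : ℝ) + A.card * (Real.exp l - 1) ≤ W.card + (α * W.card) * (l + l^2) := by gcongr
      _ = W.card * (α * (l + l^2) + 1) := by ring
      _ ≤ _ := by gcongr; exact Real.add_one_le_exp _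
  have hYm : (∑ w ∈ W, y w) ^ m ≤ (2 * (W.card.descFactorial m : ℝ)) * Real.exp (m * (α * (l + l^2))) := by
    calc (∑ w ∈ W, y w) ^ m ≤ (W.card * Real.exp (α * (l + l^2))) ^ m := by
          gcongr
      _ = (W.card : ℝ) ^ m * Real.exp (m * (α * (l + l^2))) := by rw [mul_pow, Real.exp_nat_mul]
      _ ≤ _ := by gcongr
  set F := (W.powersetCard m).filter (fun T => (α + δ) * m ≤ ((T ∩ A).card : ℝ)) with hF
  have hlow : (F.card : ℝ) * Real.exp (l * ((α + δ) * m)) ≤ ∑ T ∈ W.powersetCard m, ∏ w ∈ T, y w := by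
    calc (F.card : ℝ) * Real.exp (l * ((α + δ) * m)) = ∑ T ∈ F, Real.exp (l * ((α + δ) * m)) := by simp
      _ ≤ ∑ T ∈ F, ∏ w ∈ T, y w := by
        refine Finset.sum_le_sum fun T hT => ?_
        rw [hprod]
        have := (Finset.mem_filter.1 hT).2
        gcongr
      _ ≤ _ := by
        refine Finset.sum_le_sum_of_subset_of_nonneg (Finset.filter_subset _ _) fun T _ _ => ?_
        rw [hprod]; positivity
  have hm : (0:ℝ) < m.factorial := by exact_mod_cast m.factorial_pos
  rw [Nat.descFactorial_eq_factorial_mul_choose] at hYm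
  push_cast at hYm
  have h1 : (m.factorial : ℝ) * (F.card * Real.exp (l * ((α + δ) * m))) ≤
      m.factorial * (2 * (W.card.choose m : ℝ) * Real.exp (m * (α * (l + l^2)))) := by
    calc _ ≤ _ := mul_le_mul_of_nonneg_left hlow hm.le
      _ ≤ _ := hesymm
      _ ≤ _ := hYm
      _ = _ := by ring
  have h2 := le_of_mul_le_mul_left h1 hm
  have h3 : (F.card : ℝ) ≤ 2 * (W.card.choose m : ℝ) * Real.exp (m * (α * (l + l^2))) * Real.exp (-(l * ((α + δ) * m))) := by
    rw [Real.exp_neg, ← div_eq_mul_inv, le_div_iff₀ (Real.exp_pos _)]; exact h2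
  refine h3.trans ?_
  rw [mul_assoc, ← Real.exp_add, mul_right_comm]
  gcongr
  have : (0:ℝ) ≤ m := by positivity
  have h4 : α * l^2 - l * δ ≤ -(δ^2/8) := by rw [hl]; nlinarith [sq_nonneg δ]
  nlinarith

lemma super_bound {V : Type} [Fintype V] [DecidableEq V] (B A : Finset V) (s k : ℕ) (α δ : ℝ)
    (hBk : B.card ≤ k) (hks : k ≤ s) (hn : 2 * s ^ 2 + k + 1 ≤ Fintype.card V)
    (hA : (A.card : ℝ) ≤ α * ((Fintype.card V : ℝ) - k)) (hα : α ≤ 2) (hδ : 0 < δ) (hδ1 : δ ≤ 1) :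
    (((Finset.univ : Finset (Finset V)).filter (fun S => S.card = s ∧ B ⊆ S ∧
        (α + δ) * s + k ≤ ((S ∩ A).card : ℝ))).card : ℝ)
      ≤ 2 * Real.exp (-(δ ^ 2 / 8 * ((s : ℝ) - k))) *
        ((Fintype.card V - B.card).choose (s - B.card) : ℝ) := by
  set n := Fintype.card V with hnn
  set W := Finset.univ \ B with hWdef
  have hWc : W.card = n - B.card := by
    rw [hWdef, Finset.card_sdiff_of_subset (Finset.subset_univ _), Finset.card_univ]
  set m := s - B.card with hm
  have hms : m ≤ s := Nat.sub_le _ _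
  have hWc' : n - k ≤ W.card := by omega
  have hWbig : 2 * s ^ 2 + 1 ≤ W.card := by omega
  have hWR : (n : ℝ) - k ≤ W.card := by
    have : n ≤ W.card + k := by omega
    have : (n : ℝ) ≤ W.card + k := by exact_mod_cast this
    linarith
  have hnk : (0:ℝ) < (n:ℝ) - k := by
    have : k + 1 ≤ n := by omega
    have : (k:ℝ) + 1 ≤ n := by exact_mod_cast this
    linarith
  have hα0 : 0 ≤ α := by
    by_contra h
    push Not at h
    have : (0:ℝ) ≤ A.card := by positivity
    nlinarith
  have hWpos : (0:ℝ) < W.card := by linarith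
  have hdesc : (W.card : ℝ) ^ m ≤ 2 * (W.card.descFactorial m : ℝ) := by
    have h1 := Nat.pow_sub_le_descFactorial W.card m
    have hmW : m ≤ W.card := by nlinarith
    have h2 : (((W.card : ℝ) - m)) ^ m ≤ (W.card.descFactorial m : ℝ) := by
      rw [← Nat.cast_sub hmW]
      refine le_trans ?_ (Nat.cast_le.2 h1)
      push_cast
      have : ((W.card - m : ℕ) : ℝ) ≤ ((W.card + 1 - m : ℕ) : ℝ) := by
        exact_mod_cast (by omega)
      gcongr
    have hbern := one_add_mul_le_pow (a := -((m:ℝ) / W.card)) (by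
      have : (m : ℝ) / W.card ≤ 1 := by
        rw [div_le_one hWpos]; exact_mod_cast hmW
      linarith) m
    have hhalf : (m:ℝ) * (m / W.card) ≤ 1/2 := by
      rw [← mul_div_assoc, div_le_iff₀ hWpos]
      have : 2 * (m * m) ≤ W.card := by nlinarith
      have : (2:ℝ) * (m * m) ≤ W.card := by exact_mod_cast this
      linarith
    have h3 : ((W.card : ℝ) - m) ^ m = (W.card : ℝ)^m * (1 + -((m:ℝ) / W.card)) ^ m := by
      rw [← mul_pow]; congr 1; field_simp; ring
    have h4 : (W.card : ℝ)^m * (1/2) ≤ (W.card : ℝ)^m * (1 + -((m:ℝ) / W.card)) ^ m := by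
      gcongr; linarith
    linarith
  have hAW : (((A \ B).card : ℕ) : ℝ) ≤ α * W.card := by
    calc (((A \ B).card : ℕ) : ℝ) ≤ A.card := by exact_mod_cast Finset.card_le_card Finset.sdiff_subset
      _ ≤ α * ((n : ℝ) - k) := hA
      _ ≤ _ := by gcongr
  have key := tail_bound W (A \ B) m α δ (Finset.sdiff_subset_sdiff (Finset.subset_univ _) (le_refl _))
    (by omega) hdesc hAW hα hδ hδ1
  have hmR : (m : ℝ) = s - B.card := by rw [hm, Nat.cast_sub (hBk.trans hks)]
  have hBkR : (B.card : ℝ) ≤ k := by exact_mod_cast hBk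
  rw [hWc] at key
  have hle : ((Finset.univ : Finset (Finset V)).filter (fun S => S.card = s ∧ B ⊆ S ∧
        (α + δ) * s + k ≤ ((S ∩ A).card : ℝ))).card ≤
      ((W.powersetCard m).filter (fun T => (α + δ) * m ≤ ((T ∩ (A \ B)).card : ℝ))).card := by
    refine Finset.card_le_card_of_injOn (fun S => S \ B) ?_ ?_
    · intro S hS
      obtain ⟨-, h1, h2, h3⟩ := Finset.mem_filter.1 hS
      refine Finset.mem_coe.2 (Finset.mem_filter.2 ⟨Finset.mem_powersetCard.2 ⟨?_, ?_⟩, ?_⟩)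
      · exact Finset.sdiff_subset_sdiff (Finset.subset_univ _) (le_refl _)
      · rw [Finset.card_sdiff_of_subset h2, h1]
      · have h4 : (S ∩ A).card ≤ ((S \ B) ∩ (A \ B)).card + B.card := by
          refine le_trans (Finset.card_le_card ?_) (Finset.card_union_le _ _)
          intro v hv
          simp only [Finset.mem_inter, Finset.mem_union, Finset.mem_sdiff] at hv ⊢
          tauto
        have h5 : ((S ∩ A).card : ℝ) ≤ (((S \ B) ∩ (A \ B)).card : ℝ) + B.card := by exact_mod_cast h4
        have h6 : (α + δ) * m ≤ (α + δ) * s := by gcongr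
        dsimp only
        linarith
    · intro S hS S' hS' h
      have h2 := (Finset.mem_filter.1 hS).2.2.1
      have h2' := (Finset.mem_filter.1 hS').2.2.1
      rw [← Finset.sdiff_union_of_subset h2, ← Finset.sdiff_union_of_subset h2']
      exact congrArg (fun X => X ∪ B) h
  refine (Nat.cast_le.2 hle).trans (key.trans ?_)
  gcongr
  rw [hmR]; linarith

lemma total_ge {V : Type} [Fintype V] [DecidableEq V] (R : Finset V) (s : ℕ) (h : R.card ≤ s) :
    (Fintype.card V - R.card).choose (s - R.card) ≤
    ((Finset.univ : Finset (Finset V)).filter (fun S => S.card = s ∧ R ⊆ S)).card := by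
  have hWc : (Finset.univ \ R).card = Fintype.card V - R.card := by
    rw [Finset.card_sdiff_of_subset (Finset.subset_univ _), Finset.card_univ]
  rw [← hWc, ← Finset.card_powersetCard]
  have hd : ∀ T ∈ (Finset.univ \ R).powersetCard (s - R.card), Disjoint T R := fun T hT =>
    Finset.disjoint_of_subset_left (Finset.mem_powersetCard.1 hT).1 Finset.sdiff_disjoint
  refine Finset.card_le_card_of_injOn (fun T => T ∪ R) ?_ ?_
  · intro T hT
    refine Finset.mem_coe.2 (Finset.mem_filter.2 ⟨Finset.mem_univ _, ?_, Finset.subset_union_right⟩)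
    rw [Finset.card_union_of_disjoint (hd T hT), (Finset.mem_powersetCard.1 hT).2]
    omega
  · intro T hT T' hT' h
    rw [← Finset.union_sdiff_cancel_right (hd T hT), ← Finset.union_sdiff_cancel_right (hd T' hT')]
    exact congrArg (fun X => X \ R) h

lemma sum_choose {V : Type} [Fintype V] [DecidableEq V] (R : Finset V) (s : ℕ) (h : R.card < s)
    (hs : s < Fintype.card V) :
    ∑ v : V, (Fintype.card V - (insert v R).card).choose (s - (insert v R).card)
      = s * (Fintype.card V - R.card).choose (s - R.card) := by
  rw [← Finset.sum_sdiff (Finset.subset_univ R)]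
  have h1 : ∑ v ∈ R, (Fintype.card V - (insert v R).card).choose (s - (insert v R).card)
      = R.card * (Fintype.card V - R.card).choose (s - R.card) := by
    rw [← smul_eq_mul, ← Finset.sum_const]
    exact Finset.sum_congr rfl fun v hv => by rw [Finset.insert_eq_of_mem hv]
  have h2 : ∑ v ∈ Finset.univ \ R, (Fintype.card V - (insert v R).card).choose (s - (insert v R).card)
      = (Fintype.card V - R.card) * (Fintype.card V - R.card - 1).choose (s - R.card - 1) := by
    have hWc : (Finset.univ \ R).card = Fintype.card V - R.card := by
      rw [Finset.card_sdiff_of_subset (Finset.subset_univ _), Finset.card_univ]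
    rw [← hWc, ← smul_eq_mul, ← Finset.sum_const, hWc]
    refine Finset.sum_congr rfl fun v hv => ?_
    rw [Finset.card_insert_of_notMem (Finset.mem_sdiff.1 hv).2]
    rfl
  rw [h1, h2]
  obtain ⟨a, ha⟩ : ∃ a, Fintype.card V - R.card = a + 1 := ⟨Fintype.card V - R.card - 1, by omega⟩
  obtain ⟨b, hb⟩ : ∃ b, s - R.card = b + 1 := ⟨s - R.card - 1, by omega⟩
  have hsb : s = b + 1 + R.card := by omega
  rw [ha, hb]
  simp only [Nat.add_sub_cancel]
  rw [Nat.add_one_mul_choose_eq, hsb]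
  ring

lemma exp_final (c : ℝ) (k : ℕ) (s : ℕ) (hc : 0 < c) (hs : (5 / c + k + 1) ^ 2 ≤ (s : ℝ)) :
    2 * s * (2 * Real.exp (-(c * ((s:ℝ) - k)))) ≤ Real.exp (-Real.sqrt s) := by
  set x := Real.sqrt s with hx
  have hxs : x ^ 2 = s := Real.sq_sqrt (by positivity)
  have hx1 : 5 / c + k + 1 ≤ x := Real.le_sqrt_of_sq_le hs
  have h5 : 0 < 5 / c := by positivity
  have hk : (0:ℝ) ≤ k := by positivity
  have hcx : 5 + c * k ≤ c * x := by
    have : c * (5 / c + k) ≤ c * x := by gcongr; linarith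
    have e : c * (5 / c + k) = 5 + c * k := by field_simp
    linarith
  rw [← hxs]
  have h4 : (2 * x) ^ 2 ≤ Real.exp (4 * x) := by
    have : 2 * x ≤ Real.exp (2 * x) := by linarith [Real.add_one_le_exp (2 * x)]
    calc (2 * x) ^ 2 ≤ (Real.exp (2 * x)) ^ 2 := by
          have : 0 ≤ 2 * x := by linarith
          gcongr
      _ = _ := by rw [← Real.exp_nat_mul]; congr 1; push_cast; ring
  calc 2 * x ^ 2 * (2 * Real.exp (-(c * (x ^ 2 - k)))) = (2 * x) ^ 2 * Real.exp (-(c * (x ^ 2 - k))) := by ring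
    _ ≤ Real.exp (4 * x) * Real.exp (-(c * (x ^ 2 - k))) := by gcongr
    _ = Real.exp (4 * x + -(c * (x ^ 2 - k))) := by rw [Real.exp_add]
    _ ≤ _ := by
      gcongr
      have : c * k ≤ x * (c * x - 5) := by
        have : 0 ≤ c * k := by positivity
        nlinarith
      nlinarith

set_option maxHeartbeats 4000000 in
/-- For every `t ≥ 2` and `ε > 0` there is `s0` such that for every `s ≥ s0`
there is `n0` such that for every `n ≥ n0`: if `G` is a graph on an `n`-element vertex set in
`DegSeq_{t,ε}` (for every `1 ≤ i ≤ n/t`, fewer than `i` vertices have degree at most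
`(t−2)n/t + i + εn`), then for every `2t`-element vertex set `R`, the number of `s`-element
vertex sets `S ⊇ R` with `G[S] ∈ DegSeq_{t,ε/2}` (with `s` in place of `n`) is at least
`(1 − e^{−√s})·C(n−2t, s−2t)`. -/
theorem stmt_19 (t : ℕ) (ht : 2 ≤ t) (ε : ℝ) (hε : 0 < ε) :
    ∃ s0 : ℕ, ∀ s : ℕ, s0 ≤ s → ∃ n0 : ℕ, ∀ n : ℕ, n0 ≤ n →
    ∀ (V : Type) [Fintype V] [DecidableEq V], Fintype.card V = n →
    ∀ (G : SimpleGraph V) [DecidableRel G.Adj],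
    (∀ i : ℕ, 1 ≤ i → (i : ℝ) ≤ (n : ℝ) / t →
      (({v : V | (G.degree v : ℝ) ≤ ((t : ℝ) - 2) * n / t + i + ε * n} : Set V).ncard : ℝ)
        < i) →
    ∀ R : Finset V, R.card = 2 * t →
      (1 - Real.exp (-Real.sqrt s)) * ((n - 2*t).choose (s - 2*t) : ℝ) ≤
        (({S : Finset V | S.card = s ∧ R ⊆ S ∧
            ∀ i : ℕ, 1 ≤ i → (i : ℝ) ≤ (s : ℝ) / t →
              (({v : V | v ∈ S ∧
                  (((S.filter (fun u => G.Adj v u)).card : ℝ) ≤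
                    ((t : ℝ) - 2) * s / t + i + (ε/2) * s)} : Set V).ncard : ℝ) < i} :
          Set (Finset V)).ncard : ℝ) := by
  classical
  obtain ⟨η, hη, hη1, hηε⟩ : ∃ η : ℝ, 0 < η ∧ η ≤ 1 ∧ 16 * η ≤ ε := by
    refine ⟨min ε 1 / 16, by positivity, ?_, ?_⟩
    · linarith [min_le_right ε 1]
    · linarith [min_le_left ε 1]
  obtain ⟨k, hk⟩ : ∃ k : ℕ, k = 2 * t + 1 := ⟨_, rfl⟩
  refine ⟨⌈(5 / (η ^ 2 / 8) + k + 1) ^ 2⌉₊ + ⌈(k : ℝ) / η⌉₊ + k, fun s hs => ?_⟩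
  refine ⟨2 * s ^ 2 + 2 * k + 1 + ⌈((k : ℝ) + 1) / η⌉₊, fun n hn V _ _ hV G _ hG R hR => ?_⟩
  have hs1 : (5 / (η ^ 2 / 8) + k + 1) ^ 2 ≤ (s : ℝ) :=
    (Nat.le_ceil _).trans (Nat.cast_le.2 (by omega))
  have hs2 : (k : ℝ) ≤ η * s := by
    have : (k : ℝ) / η ≤ s := (Nat.le_ceil _).trans (Nat.cast_le.2 (by omega))
    rw [div_le_iff₀ hη] at this; linarith
  have hks : k ≤ s := by omega
  have hn1 : (k : ℝ) + 1 ≤ η * (n - k) := by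
    have h1 : ((k : ℝ) + 1) / η ≤ ((n - k : ℕ) : ℝ) := (Nat.le_ceil _).trans (Nat.cast_le.2 (by omega))
    rw [div_le_iff₀ hη, Nat.cast_sub (by omega)] at h1; linarith
  have hk0 : (0:ℝ) ≤ k := by positivity
  have hn2 : (k : ℝ) + 1 ≤ η * n := by nlinarith
  have hs0 : (0:ℝ) < s := by exact_mod_cast (by omega : 0 < s)
  have hn0 : (0:ℝ) < n := by exact_mod_cast (by omega : 0 < n)
  have ht0 : (0:ℝ) < t := by exact_mod_cast (by omega : 0 < t)
  have hsn : s < n := by nlinarith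
  set p : ℝ := 2 * Real.exp (-(η ^ 2 / 8 * ((s : ℝ) - k))) with hp
  have hp0 : 0 ≤ p := by positivity
  have hfin : 2 * s * p ≤ Real.exp (-Real.sqrt s) := exp_final _ k s (by positivity) hs1
  set C : ℕ := (n - 2*t).choose (s - 2*t) with hC
  -- the sets
  let A : V → Finset V := fun v => Finset.univ.filter (fun u => ¬ G.Adj v u)
  let a : V → ℝ := fun v => 1 - (G.degree v : ℝ) / n + η
  let D : V → Finset (Finset V) := fun v => Finset.univ.filter (fun S => S.card = s ∧ insert v R ⊆ S ∧
        (a v + η) * s + k ≤ ((S ∩ A v).card : ℝ))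
  let B : ℕ → Finset V := fun i => Finset.univ.filter (fun v =>
    (G.degree v : ℝ) ≤ ((t : ℝ) - 2) * n / t + (i : ℝ) / s * n + (ε / 2 + 3 * η) * n)
  let b : ℕ → ℝ := fun i => (i : ℝ) / s - 3 * η
  let E : ℕ → Finset (Finset V) := fun i => Finset.univ.filter (fun S => S.card = s ∧ R ⊆ S ∧
        (b i + η) * s + k ≤ ((S ∩ B i).card : ℝ))
  let I : Finset ℕ := (Finset.Icc 1 s).filter (fun i => (i : ℝ) ≤ (s : ℝ) / t ∧ (B i).Nonempty)
  have hD : ∀ v, ((D v).card : ℝ) ≤ p * ((n - (insert v R).card).choose (s - (insert v R).card) : ℝ) := by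
    intro v
    have hAc : ((A v).card : ℝ) = n - G.degree v := by
      have h1 := Finset.card_filter_add_card_filter_not (s := (Finset.univ : Finset V)) (fun u => G.Adj v u)
      rw [Finset.card_univ, hV] at h1
      have h2 : (Finset.univ.filter (fun u => G.Adj v u)).card = G.degree v := by
        rw [← SimpleGraph.card_neighborFinset_eq_degree, SimpleGraph.neighborFinset_eq_filter]
      rw [h2] at h1
      have : (G.degree v : ℝ) + (A v).card = n := by exact_mod_cast h1
      linarith
    have hd0 : 0 ≤ (G.degree v : ℝ) / n := by positivity
    have hdn : (G.degree v : ℝ) / n * n = G.degree v := by field_simp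
    have := super_bound (insert v R) (A v) s k (a v) η
      ((Finset.card_insert_le _ _).trans (by omega)) hks (by rw [hV]; omega)
      (by rw [hAc, hV]; simp only [a]; nlinarith) (by simp only [a]; linarith) hη hη1
    rw [hV] at this
    exact this
  have hE : ∀ i ∈ I, ((E i).card : ℝ) ≤ p * C := by
    intro i hi
    obtain ⟨hi1, hi2, hi3⟩ := Finset.mem_filter.1 hi
    rw [Finset.mem_Icc] at hi1
    have his : (i : ℝ) / s ≤ 1 / t := by
      rw [div_le_div_iff₀ hs0 ht0]
      rw [le_div_iff₀ ht0] at hi2; linarith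
    have hib : (i : ℝ) / s ≤ 1 := by
      rw [div_le_one hs0]; exact_mod_cast hi1.2
    have hBc : ((B i).card : ℝ) ≤ ((i : ℝ) / s - 5 * η) * n + 1 := by
      set x := ((i : ℝ) / s - 5 * η) * n with hx
      have hxn : x + 1 ≤ n / t := by
        have : (i : ℝ) / s * n ≤ 1 / t * n := by gcongr
        have e : 1 / (t:ℝ) * n = n / t := by ring
        rw [hx]; nlinarith
      have hj := hG (max 1 ⌈x⌉₊) (le_max_left _ _) (by
        rw [Nat.cast_max, max_le_iff]
        constructor
        · rw [Nat.cast_one, le_div_iff₀ ht0, one_mul]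
          exact_mod_cast (by omega : t ≤ n)
        · by_cases h0 : 0 ≤ x
          · exact (Nat.ceil_lt_add_one h0).le.trans hxn
          · rw [Nat.ceil_eq_zero.2 (by linarith)]; simp; positivity)
      have hsub : ((B i : Finset V) : Set V) ⊆ {v : V | (G.degree v : ℝ) ≤ ((t : ℝ) - 2) * n / t
          + (max 1 ⌈x⌉₊ : ℕ) + ε * n} := by
        intro v hv
        have h1 := (Finset.mem_filter.1 (Finset.mem_coe.1 hv)).2
        have h2 : x ≤ (max 1 ⌈x⌉₊ : ℕ) := (Nat.le_ceil x).trans (Nat.cast_le.2 (le_max_right _ _))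
        rw [Set.mem_ofPred_eq]
        have h3 : x = (i : ℝ) / s * n - 5 * η * n := by rw [hx]; ring
        nlinarith
      have hc := Set.ncard_le_ncard hsub (Set.toFinite _)
      rw [Set.ncard_coe_finset] at hc
      have hj' := Nat.cast_lt.1 hj
      have hpos := hi3.card_pos
      have h2 : (B i).card < ⌈x⌉₊ := by omega
      have h0 : 0 ≤ x := by
        by_contra h0
        rw [Nat.ceil_eq_zero.2 (by linarith)] at h2
        omega
      have : ((B i).card : ℝ) < ⌈x⌉₊ := by exact_mod_cast h2
      linarith [Nat.ceil_lt_add_one h0]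
    have := super_bound R (B i) s k (b i) η (by omega) hks (by rw [hV]; omega)
      (by rw [hV]; simp only [b]; nlinarith) (by simp only [b]; linarith) hη hη1
    rw [hV, hR] at this
    exact this
  -- good and bad
  set P : Finset V → Prop := fun S => ∀ i : ℕ, 1 ≤ i → (i : ℝ) ≤ (s : ℝ) / t →
              (({v : V | v ∈ S ∧
                  (((S.filter (fun u => G.Adj v u)).card : ℝ) ≤
                    ((t : ℝ) - 2) * s / t + i + (ε/2) * s)} : Set V).ncard : ℝ) < i with hP
  have hgood : {S : Finset V | S.card = s ∧ R ⊆ S ∧ P S} =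
      (((Finset.univ : Finset (Finset V)).filter (fun S => S.card = s ∧ R ⊆ S ∧ P S) : Finset (Finset V)) : Set (Finset V)) := by
    ext S; simp
  change _ ≤ (({S : Finset V | S.card = s ∧ R ⊆ S ∧ P S}.ncard : ℕ) : ℝ)
  rw [hgood, Set.ncard_coe_finset]
  set Gd := (Finset.univ : Finset (Finset V)).filter (fun S => S.card = s ∧ R ⊆ S ∧ P S) with hGd
  have htot := total_ge R s (by omega)
  rw [hV, hR] at htot
  have hcover : (Finset.univ : Finset (Finset V)).filter (fun S => S.card = s ∧ R ⊆ S) ⊆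
      Gd ∪ (Finset.univ.biUnion D ∪ I.biUnion E) := by
    intro S hS
    obtain ⟨-, hS1, hS2⟩ := Finset.mem_filter.1 hS
    by_contra hno
    simp only [Finset.mem_union, not_or, Finset.mem_biUnion, not_exists, not_and] at hno
    obtain ⟨n1, n2, n3⟩ := hno
    refine n1 (Finset.mem_filter.2 ⟨Finset.mem_univ _, hS1, hS2, fun i hi1 hi2 => ?_⟩)
    have hsub : {v : V | v ∈ S ∧ (((S.filter (fun u => G.Adj v u)).card : ℝ) ≤
                    ((t : ℝ) - 2) * s / t + i + (ε/2) * s)} ⊆ ((S ∩ B i : Finset V) : Set V) := by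
      rintro v ⟨hvS, hv⟩
      refine Finset.mem_coe.2 (Finset.mem_inter.2 ⟨hvS, Finset.mem_filter.2 ⟨Finset.mem_univ _, ?_⟩⟩)
      have h1 : ((S ∩ A v).card : ℝ) < (a v + η) * s + k := by
        by_contra h
        push Not at h
        exact n2 v (Finset.mem_univ _) (Finset.mem_filter.2 ⟨Finset.mem_univ _, hS1,
          Finset.insert_subset hvS hS2, h⟩)
      have h2 := Finset.card_filter_add_card_filter_not (s := S) (fun u => G.Adj v u)
      have h3 : S ∩ A v = S.filter (fun u => ¬ G.Adj v u) := by
        ext u; simp [A]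
      rw [← h3, hS1] at h2
      have h4 : ((S.filter (fun u => G.Adj v u)).card : ℝ) + (S ∩ A v).card = s := by exact_mod_cast h2
      have h5 : (G.degree v : ℝ) / n * s ≤ ((t : ℝ) - 2) * s / t + i + (ε/2) * s + 3 * η * s := by
        simp only [a] at h1
        nlinarith
      have h6 : (G.degree v : ℝ) / n * s * (n / s) ≤
        (((t : ℝ) - 2) * s / t + i + (ε/2) * s + 3 * η * s) * (n / s) := by gcongr
      have e1 : (G.degree v : ℝ) / n * s * (n / s) = G.degree v := by field_simp
      have e2 : (((t : ℝ) - 2) * s / t + i + (ε/2) * s + 3 * η * s) * (n / s) =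
        ((t : ℝ) - 2) * n / t + (i : ℝ) / s * n + (ε / 2 + 3 * η) * n := by field_simp; ring
      rw [e1, e2] at h6
      exact h6
    have hc := Set.ncard_le_ncard hsub (Set.toFinite _)
    rw [Set.ncard_coe_finset] at hc
    refine lt_of_le_of_lt (Nat.cast_le.2 hc) ?_
    by_cases hne : (B i).Nonempty
    · have his : i ≤ s := by
        have : (s:ℝ) / t ≤ s := div_le_self hs0.le (by exact_mod_cast (by omega : 1 ≤ t))
        exact_mod_cast hi2.trans this
      have hiI : i ∈ I := Finset.mem_filter.2 ⟨Finset.mem_Icc.2 ⟨hi1, his⟩, hi2, hne⟩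
      have h1 : ((S ∩ B i).card : ℝ) < (b i + η) * s + k := by
        by_contra h
        push Not at h
        exact n3 i hiI (Finset.mem_filter.2 ⟨Finset.mem_univ _, hS1, hS2, h⟩)
      have e : (b i + η) * s = i - 2 * η * s := by simp only [b]; field_simp; ring
      rw [e] at h1
      nlinarith
    · rw [Finset.not_nonempty_iff_eq_empty.1 hne]
      simp; omega
  have hcard := (Finset.card_le_card hcover).trans ((Finset.card_union_le _ _).trans
    (Nat.add_le_add_left (Finset.card_union_le _ _) _))
  have hDs : ((Finset.univ.biUnion D).card : ℝ) ≤ p * (s * C) := by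
    have h1 : ((Finset.univ.biUnion D).card : ℝ) ≤ ∑ v, ((D v).card : ℝ) := by
      exact_mod_cast Finset.card_biUnion_le
    refine h1.trans ((Finset.sum_le_sum fun v _ => hD v).trans ?_)
    rw [← Finset.mul_sum]
    have h2 := sum_choose R s (by omega) (by omega)
    rw [hV, hR] at h2
    gcongr
    exact_mod_cast h2.le
  have hEs : ((I.biUnion E).card : ℝ) ≤ s * (p * C) := by
    have h1 : ((I.biUnion E).card : ℝ) ≤ ∑ i ∈ I, ((E i).card : ℝ) := by
      exact_mod_cast Finset.card_biUnion_le
    refine h1.trans ((Finset.sum_le_sum fun i hi => hE i hi).trans ?_)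
    rw [Finset.sum_const, nsmul_eq_mul]
    have : I.card ≤ s := (Finset.card_filter_le _ _).trans (by simp)
    gcongr
  have hall : (C : ℝ) ≤ Gd.card + ((Finset.univ.biUnion D).card + (I.biUnion E).card) := by
    exact_mod_cast htot.trans hcard
  have hC0 : (0:ℝ) ≤ C := by positivity
  have := mul_le_mul_of_nonneg_right hfin hC0
  linarith
end
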